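/- There exists ε₀ > 0 such that for every 0 < ε ≤ ε₀ the Milnor map φ : S(0,ε) \ V → S¹ (the unit circle in ℂ) given by φ(x) = f(x)/‖f(x)‖ is a locally trivial fibration. -/

import Mathlib

/-- `p : Z → B` is a locally trivial fibration (with some fibre `F`). -/
def IsLocTrivFib {Z B : Type} [TopologicalSpace Z] [TopologicalSpace B] (p : Z → B) : Prop :=
  ∃ (F : Type) (_ : TopologicalSpace F), Continuous p ∧
    ∀ b : B, ∃ W : Set B, IsOpen W ∧ b ∈ W ∧
      ∃ e : (p ⁻¹' W) ≃ₜ (W × F), ∀ z : (p ⁻¹' W), ((e z).1 : B) = p (z : Z)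

/-!
The fibration is trivialized by the flow of a vector field on the sphere `S(0, ε)` minus `V` along
which the phase of `f` turns at unit angular speed.

*Milnor's lemma.* By Osgood's lemma (`analyticAt_of_differentiableOn`) `f` is analytic near `0`.
The key fact (`milnor_lemma`) is that, for `z` near `0` with `f z ≠ 0`, if `∇f` is a complex
multiple of `z` then the logarithmic radial derivative `Df(z) z / f(z)` has argument in
`(-π/4, π/4)`. If this failed at points arbitrarily close to `0`, the curve selection lemma would
give a real analytic arc `γ` at `0` along which it fails. With `f (γ t) ~ A t ^ p` and
`γ t ~ a t ^ q`, the logarithmic radial derivative along `γ` tends to `p / q > 0`, a contradiction.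

*Curve selection.* The curve selection lemma (`exists_arc_sign_eq_of_frequently`) is deduced from
local uniformization along an ultrafilter (`hasLocalUniformization`): given points tending to `0`
along an ultrafilter and a nonzero real analytic germ, some analytic substitution, through which
the points lift to points still tending to `0`, turns the germ into a monomial times a unit. Once
this holds for the product of the functions whose signs matter, an arc is the image of a half-line
in an orthant. Uniformization is proved by induction on the dimension and, for a germ of order `d`
in one variable `z`, by induction on `d`. A Tschirnhaus translation kills the coefficient of
`z ^ (d - 1)`, and the remaining coefficients are uniformized by the inductive hypothesis and made
divisible by powers of one monomial `mon β` (`exists_weighted_preparation`). Along the ultrafilter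
either `z = O(mon β)`, and after rescaling `z` by `mon β` the order drops, since a polynomial of
degree `d` without term of degree `d - 1` which is not a pure power has no root of multiplicity
`d`; or `mon β = o(z)`, and blow-up charts (`exists_lift_coord_dvd_mon`) turn the germ into a unit
times `z ^ d`. No global resolution of singularities is needed.

*The flow.* Milnor's lemma makes `liftDenom f` positive near `0` off `V`. There `liftField f` is
continuously differentiable, tangent to the spheres, and satisfies `Df (liftField f) = f (i + r)`
with `r` real and `|r| ≤ 1` (`fderiv_liftField`, `abs_liftRate_le_one`). Hence `|f|` varies at most
exponentially along trajectories, so these do not reach `V` and exist for all time, while the phase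
of `f` is multiplied by `e ^ (i t)` (`exists_spherical_flow`). Following the flow back along a
branch of the argument trivializes the Milnor map over the circle minus a point
(`isLocTrivFib_of_flow`).
-/

namespace Milnor

open Topology Filter Set

/-! ### Division of analytic germs -/

section Average

variable {E F G : Type*} [NormedAddCommGroup E] [NormedSpace ℝ E] [NormedAddCommGroup F]
  [NormedSpace ℝ F] [NormedAddCommGroup G] [NormedSpace ℝ G]

/-- The power series of `v ↦ ∫ s in 0..1, k (T s v)` at `0`, where `p` is that of `k`. -/
noncomputable def averageSeries (p : FormalMultilinearSeries ℝ F G) (T : ℝ → E →L[ℝ] F) :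
    FormalMultilinearSeries ℝ E G :=
  fun n => ∫ s in (0 : ℝ)..1, (p n).compContinuousLinearMap fun _ => T s

theorem norm_averageSeries_le (p : FormalMultilinearSeries ℝ F G) {T : ℝ → E →L[ℝ] F} {C : ℝ}
    (hC : ∀ s ∈ Icc (0 : ℝ) 1, ‖T s‖ ≤ C) (n : ℕ) : ‖averageSeries p T n‖ ≤ ‖p n‖ * C ^ n := by
  have hbound : ∀ s ∈ uIoc (0 : ℝ) 1,
      ‖(p n).compContinuousLinearMap fun _ => T s‖ ≤ ‖p n‖ * C ^ n := by
    intro s hs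
    rw [uIoc_of_le zero_le_one] at hs
    refine (ContinuousMultilinearMap.norm_compContinuousLinearMap_le _ _).trans ?_
    simp only [Finset.prod_const, Finset.card_univ, Fintype.card_fin]
    gcongr
    exact hC s ⟨hs.1.le, hs.2⟩
  simpa [averageSeries] using intervalIntegral.norm_integral_le_of_norm_le_const hbound

theorem averageSeries_apply [CompleteSpace G] (p : FormalMultilinearSeries ℝ F G)
    {T : ℝ → E →L[ℝ] F} (hT : Continuous T) (n : ℕ) (v : E) :
    averageSeries p T n (fun _ => v) = ∫ s in (0 : ℝ)..1, p n fun _ => T s v := by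
  have hcont : Continuous fun s => (p n).compContinuousLinearMap fun _ => T s :=
    ((ContinuousMultilinearMap.compContinuousLinearMapContinuousMultilinear ℝ
      (fun _ : Fin n => E) (fun _ : Fin n => F) G).cont.comp
      (continuous_pi fun _ => hT)).clm_apply continuous_const
  simpa [averageSeries] using ((ContinuousMultilinearMap.apply ℝ (fun _ : Fin n => E) G
    fun _ => v).intervalIntegral_comp_comm (hcont.intervalIntegrable 0 1)).symm

theorem hasSum_averageSeries [CompleteSpace G] {k : F → G} {p : FormalMultilinearSeries ℝ F G}
    {r : ENNReal} (hp : HasFPowerSeriesOnBall k p 0 r) {T : ℝ → E →L[ℝ] F} (hT : Continuous T)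
    {C : NNReal} (hC : ∀ s ∈ Icc (0 : ℝ) 1, ‖T s‖ ≤ C) {v : E} (hv : (C * ‖v‖₊ : NNReal) < r) :
    HasSum (fun n => averageSeries p T n fun _ => v) (∫ s in (0 : ℝ)..1, k (T s v)) := by
  have hTv : ∀ s ∈ uIoc (0 : ℝ) 1, ‖T s v‖ ≤ C * ‖v‖ := fun s hs => by
    rw [uIoc_of_le zero_le_one] at hs
    exact ((T s).le_opNorm v).trans (by gcongr; exact hC s ⟨hs.1.le, hs.2⟩)
  simp only [averageSeries_apply p hT]
  refine intervalIntegral.hasSum_integral_of_dominated_convergence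
    (fun n _ => ‖p n‖ * (C * ‖v‖) ^ n) (fun n => ?_) (fun n => ?_) ?_ (by simp) ?_
  · have hpn : Continuous fun s => p n fun _ => T s v :=
      (p n).cont.comp (continuous_pi fun _ => hT.clm_apply continuous_const)
    exact hpn.aestronglyMeasurable
  · refine Eventually.of_forall fun s hs => ((p n).le_opNorm _).trans ?_
    simp only [Finset.prod_const, Finset.card_univ, Fintype.card_fin]
    gcongr
    exact hTv s hs
  · exact Eventually.of_forall fun s _ =>
      p.summable_norm_mul_pow (r := C * ‖v‖₊) (hv.trans_le hp.r_le)
  · refine Eventually.of_forall fun s hs => ?_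
    have hmem : T s v ∈ Metric.eball (0 : F) r := by
      rw [Metric.mem_eball, edist_zero_right, enorm_eq_nnnorm]
      exact (ENNReal.coe_le_coe.2 (by exact_mod_cast hTv s hs)).trans_lt hv
    simpa using hp.hasSum hmem

theorem analyticAt_integral_comp [CompleteSpace G] {k : F → G} (hk : AnalyticAt ℝ k 0)
    {T : ℝ → E →L[ℝ] F} (hT : Continuous T) :
    AnalyticAt ℝ (fun v => ∫ s in (0 : ℝ)..1, k (T s v)) 0 := by
  obtain ⟨p, r, hp⟩ := hk
  obtain ⟨C, hC0, hC⟩ : ∃ C : NNReal, 0 < C ∧ ∀ s ∈ Icc (0 : ℝ) 1, ‖T s‖ ≤ C := by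
    obtain ⟨C, hC⟩ := isCompact_Icc.exists_bound_of_continuousOn hT.continuousOn
    exact ⟨C.toNNReal + 1, by positivity, fun s hs =>
      (hC s hs).trans ((Real.le_coe_toNNReal C).trans (by simp))⟩
  obtain ⟨ρ, hρ0, hρ⟩ := ENNReal.lt_iff_exists_nnreal_btwn.1 hp.r_pos
  have hρ0 : 0 < ρ := by exact_mod_cast hρ0
  obtain ⟨M, -, hM⟩ := p.norm_mul_pow_le_of_lt_radius (hρ.trans_le hp.r_le)
  refine ⟨averageSeries p T, ((ρ / C : NNReal) : ENNReal), ?_, by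
    exact_mod_cast div_pos hρ0 hC0, fun {v} hv => ?_⟩
  · refine FormalMultilinearSeries.le_radius_of_bound _ M fun n => ?_
    calc ‖averageSeries p T n‖ * (ρ / C : NNReal) ^ n
        ≤ ‖p n‖ * C ^ n * (ρ / C : NNReal) ^ n := by gcongr; exact norm_averageSeries_le p hC n
      _ = ‖p n‖ * ρ ^ n := by
          rw [mul_assoc, ← mul_pow, NNReal.coe_div, mul_div_cancel₀ _ (by positivity)]
      _ ≤ M := hM n
  · rw [zero_add]
    refine hasSum_averageSeries hp hT hC (lt_of_le_of_lt ?_ hρ)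
    rw [Metric.mem_eball, edist_zero_right, enorm_eq_nnnorm, ENNReal.coe_lt_coe,
      lt_div_iff₀ hC0] at hv
    exact_mod_cast (mul_comm (C : NNReal) _ ▸ hv.le)

end Average

section Division

variable {E : Type*} [NormedAddCommGroup E] [NormedSpace ℝ E] {a b h : E → ℝ}

/-- The quotient is the average of the derivative of `h` in the direction `e` over the segment from
`v - ℓ v • e` to `v`. -/
theorem exists_eq_comp_add_mul (hh : AnalyticAt ℝ h 0) (ℓ : E →L[ℝ] ℝ) (e : E) :
    ∃ q : E → ℝ, AnalyticAt ℝ q 0 ∧ ∀ᶠ v in 𝓝 0, h v = h (v - ℓ v • e) + ℓ v * q v := by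
  let T : ℝ → E →L[ℝ] E := fun s => .id ℝ E - (1 - s) • ℓ.smulRight e
  have hT : Continuous T := by fun_prop
  have hTv : ∀ s v, T s v = v - ((1 - s) * ℓ v) • e := fun s v => by simp [T, smul_smul]
  have hD : ∀ {w}, AnalyticAt ℝ h w → AnalyticAt ℝ (fun v => fderiv ℝ h v e) w := fun hw =>
    ((ContinuousLinearMap.apply ℝ ℝ e).analyticAt _).comp hw.fderiv
  refine ⟨_, analyticAt_integral_comp (hD hh) hT, ?_⟩
  have hseg : ∀ᶠ v in 𝓝 (0 : E), ∀ s ∈ Icc (0 : ℝ) 1, AnalyticAt ℝ h (T s v) := by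
    refine isCompact_Icc.eventually_forall_of_forall_eventually fun s _ => ?_
    have hTs : Tendsto (fun z : E × ℝ => T z.2 z.1) (𝓝 (0, s)) (𝓝 0) := by
      have : Continuous fun z : E × ℝ => T z.2 z.1 := by fun_prop
      simpa using this.tendsto (0, s)
    exact hTs.eventually hh.eventually_analyticAt
  filter_upwards [hseg] with v hv
  rw [← uIcc_of_le (zero_le_one' ℝ)] at hv
  have hderiv : ∀ s ∈ uIcc (0 : ℝ) 1,
      HasDerivAt (fun s => h (T s v)) (ℓ v * fderiv ℝ h (T s v) e) s := fun s hs => by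
    have hTs : HasDerivAt (fun s => T s v) (ℓ v • e) s := by
      simp only [hTv]
      simpa using ((((hasDerivAt_id s).const_sub 1).mul_const (ℓ v)).smul_const e).const_sub v
    have hcomp := (hv s hs).differentiableAt.hasFDerivAt.comp_hasDerivAt s hTs
    rwa [map_smul, smul_eq_mul] at hcomp
  have hcont : ContinuousOn (fun s => ℓ v * fderiv ℝ h (T s v) e) (uIcc 0 1) := fun s hs =>
    (continuousAt_const.mul (ContinuousAt.comp (f := fun s => T s v) (hD (hv s hs)).continuousAt
      (hT.clm_apply continuous_const).continuousAt)).continuousWithinAt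
  have hFTC := intervalIntegral.integral_eq_sub_of_hasDerivAt hderiv hcont.intervalIntegrable
  rw [intervalIntegral.integral_const_mul] at hFTC
  rw [hFTC, hTv, hTv]
  simp

theorem eventuallyEq_zero_or_eventuallyEq_zero_of_mul (ha : AnalyticAt ℝ a 0)
    (hb : AnalyticAt ℝ b 0) (hab : a * b =ᶠ[𝓝 0] 0) : a =ᶠ[𝓝 0] 0 ∨ b =ᶠ[𝓝 0] 0 := by
  obtain ⟨ρ, hρ, hball⟩ := Metric.eventually_nhds_iff_ball.1
    (ha.eventually_analyticAt.and (hb.eventually_analyticAt.and hab))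
  refine or_iff_not_imp_left.2 fun ha0 => ?_
  obtain ⟨w, haw, hw⟩ : ∃ w, a w ≠ 0 ∧ w ∈ Metric.ball (0 : E) ρ :=
    ((not_eventually.1 ha0).and_eventually (Metric.ball_mem_nhds 0 hρ)).exists
  have hbw : b =ᶠ[𝓝 w] 0 := by
    filter_upwards [(hball w hw).1.continuousAt.eventually_ne haw,
      Metric.isOpen_ball.mem_nhds hw] with v hav hv
    exact (mul_eq_zero.1 (hball v hv).2.2).resolve_left hav
  have hbρ : AnalyticOnNhd ℝ b (Metric.ball 0 ρ) := fun v hv => (hball v hv).2.1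
  exact (hbρ.eqOn_of_preconnected_of_eventuallyEq (fun v _ => analyticAt_const)
    (convex_ball _ _).isPreconnected hw hbw).eventuallyEq_of_mem (Metric.ball_mem_nhds 0 hρ)

theorem eventuallyEq_of_mul_left_cancel {c : E → ℝ} (hc : AnalyticAt ℝ c 0)
    (hc0 : ¬ c =ᶠ[𝓝 0] 0) (ha : AnalyticAt ℝ a 0) (hb : AnalyticAt ℝ b 0)
    (h : c * a =ᶠ[𝓝 0] c * b) : a =ᶠ[𝓝 0] b := by
  have hsub : c * (a - b) =ᶠ[𝓝 0] 0 := by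
    filter_upwards [h] with x hx
    simpa [mul_sub, sub_eq_zero] using hx
  filter_upwards [(eventuallyEq_zero_or_eventuallyEq_zero_of_mul hc (ha.sub hb)
    hsub).resolve_left hc0] with x hx
  exact sub_eq_zero.1 hx

theorem prod_not_eventuallyEq_zero {ι : Type*} {s : Finset ι} {g : ι → E → ℝ}
    (hg : ∀ i ∈ s, AnalyticAt ℝ (g i) 0) (hg0 : ∀ i ∈ s, ¬ g i =ᶠ[𝓝 0] 0) :
    ¬ ∏ i ∈ s, g i =ᶠ[𝓝 0] 0 := by
  classical
  induction s using Finset.induction_on with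
  | empty => exact fun h => one_ne_zero (h.self_of_nhds)
  | insert i s hi ih =>
    rw [Finset.prod_insert hi]
    simp only [Finset.mem_insert, forall_eq_or_imp] at hg hg0
    exact fun h => (eventuallyEq_zero_or_eventuallyEq_zero_of_mul hg.1
      (Finset.analyticAt_prod s hg.2) h).elim hg0.1 (ih hg.2 hg0.2)

end Division

/-! ### Monomials and normal crossings -/

/-- The monomial with exponent `α`, as a function on `ι → ℝ`. -/
def mon {ι : Type*} [Fintype ι] (α : ι → ℕ) (x : ι → ℝ) : ℝ := ∏ i, x i ^ α i

/-- The germ of `h` at the origin is the product of a monomial and an analytic unit. -/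
def HasNormalCrossings {ι : Type*} [Fintype ι] (h : (ι → ℝ) → ℝ) : Prop :=
  ∃ (α : ι → ℕ) (u : (ι → ℝ) → ℝ), AnalyticAt ℝ u 0 ∧ u 0 ≠ 0 ∧ h =ᶠ[𝓝 0] mon α * u

section Monomials

variable {ι : Type*} [Fintype ι]

theorem analyticAt_coord (i : ι) (x : ι → ℝ) : AnalyticAt ℝ (fun x : ι → ℝ => x i) x :=
  (ContinuousLinearMap.proj (R := ℝ) (φ := fun _ : ι => ℝ) i).analyticAt x

theorem analyticAt_mon (α : ι → ℕ) (x : ι → ℝ) : AnalyticAt ℝ (mon α) x :=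
  Finset.analyticAt_fun_prod _ fun i _ => (analyticAt_coord i x).pow _

theorem mon_zero (x : ι → ℝ) : mon 0 x = 1 := by simp [mon]

theorem mon_add (α β : ι → ℕ) (x : ι → ℝ) : mon (α + β) x = mon α x * mon β x := by
  simp [mon, pow_add, Finset.prod_mul_distrib]

theorem mon_nsmul (k : ℕ) (α : ι → ℕ) (x : ι → ℝ) : mon (k • α) x = mon α x ^ k := by
  simp [mon, mul_comm k, pow_mul, Finset.prod_pow]

theorem mon_single [DecidableEq ι] (i : ι) (k : ℕ) (x : ι → ℝ) :
    mon (Pi.single i k) x = x i ^ k := by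
  rw [mon, Finset.prod_eq_single i (fun j _ hj => by simp [Pi.single_eq_of_ne hj]) (by simp)]
  simp

theorem mon_single_add [DecidableEq ι] (i : ι) (α : ι → ℕ) (x : ι → ℝ) :
    mon (Pi.single i 1 + α) x = x i * mon α x := by
  rw [mon_add, mon_single, pow_one]

theorem mon_congr {α : ι → ℕ} {x y : ι → ℝ} (h : ∀ i, α i ≠ 0 → x i = y i) : mon α x = mon α y :=
  Finset.prod_congr rfl fun i _ => by
    rcases eq_or_ne (α i) 0 with h0 | h0
    · simp [h0]
    · rw [h i h0]

theorem mon_eq_zero {α : ι → ℕ} {x : ι → ℝ} {i : ι} (hi : α i ≠ 0) (hx : x i = 0) :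
    mon α x = 0 :=
  Finset.prod_eq_zero (Finset.mem_univ i) (by simp [hx, hi])

theorem mon_ne_zero {α : ι → ℕ} {x : ι → ℝ} (hx : ∀ i, α i ≠ 0 → x i ≠ 0) : mon α x ≠ 0 :=
  Finset.prod_ne_zero_iff.2 fun i _ => by
    rcases eq_or_ne (α i) 0 with h | h
    · simp [h]
    · exact pow_ne_zero _ (hx i h)

theorem mon_apply_zero {α : ι → ℕ} (hα : α ≠ 0) : mon α 0 = 0 :=
  have ⟨_, hi⟩ := Function.ne_iff.1 hα
  mon_eq_zero hi rfl

omit [Fintype ι] in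
theorem single_add_sub [DecidableEq ι] {α : ι → ℕ} {j : ι} (hj : α j ≠ 0) :
    Pi.single j 1 + (α - Pi.single j 1) = α := by
  refine add_tsub_cancel_of_le fun i => ?_
  rcases eq_or_ne i j with rfl | h
  · simpa [Nat.one_le_iff_ne_zero] using hj
  · simp [Pi.single_eq_of_ne h]

theorem not_eventuallyEq_zero_of_ne {X : Type*} [TopologicalSpace X] {u : X → ℝ} {x : X}
    (h : u x ≠ 0) : ¬ u =ᶠ[𝓝 x] 0 := fun hu => h hu.self_of_nhds

theorem mon_not_eventuallyEq_zero (α : ι → ℕ) : ¬ mon α =ᶠ[𝓝 0] 0 := by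
  intro h
  have hdiag : Tendsto (fun (t : ℝ) (_ : ι) => t) (𝓝[≠] 0) (𝓝 0) :=
    tendsto_pi_nhds.2 fun _ => tendsto_nhdsWithin_of_tendsto_nhds tendsto_id
  obtain ⟨t, ht, ht0⟩ := ((hdiag.eventually h).and eventually_mem_nhdsWithin).exists
  exact mon_ne_zero (fun _ _ => ht0) ht

end Monomials

namespace HasNormalCrossings

variable {ι : Type*} [Fintype ι] {g h a b : (ι → ℝ) → ℝ}

theorem analyticAt (hh : HasNormalCrossings h) : AnalyticAt ℝ h 0 :=
  have ⟨α, _, hu, _, he⟩ := hh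
  ((analyticAt_mon α 0).mul hu).congr he.symm

theorem of_ne_zero (hh : AnalyticAt ℝ h 0) (h0 : h 0 ≠ 0) : HasNormalCrossings h :=
  ⟨0, h, hh, h0, .of_forall fun x => by simp [mon_zero]⟩

theorem of_mon (α : ι → ℕ) : HasNormalCrossings (mon α) :=
  ⟨α, 1, analyticAt_const, one_ne_zero, .of_forall fun x => by simp⟩

theorem of_coord (i : ι) : HasNormalCrossings fun x : ι → ℝ => x i := by
  classical
  exact funext (fun x : ι → ℝ => mon_single i 1 x ▸ pow_one (x i)) ▸ of_mon (Pi.single i 1)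

theorem mul (hg : HasNormalCrossings g) (hh : HasNormalCrossings h) :
    HasNormalCrossings (g * h) := by
  obtain ⟨α, u, hu, hu0, heg⟩ := hg
  obtain ⟨β, v, hv, hv0, heh⟩ := hh
  refine ⟨α + β, u * v, hu.mul hv, mul_ne_zero hu0 hv0, ?_⟩
  filter_upwards [heg, heh] with x hgx hhx
  simp only [Pi.mul_apply, hgx, hhx, mon_add]
  ring

theorem pow (hh : HasNormalCrossings h) (k : ℕ) : HasNormalCrossings (h ^ k) := by
  induction k with
  | zero => exact of_ne_zero analyticAt_const (by simp)
  | succ k ih => exact pow_succ h k ▸ ih.mul hh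

theorem congr (hg : HasNormalCrossings g) (hgh : g =ᶠ[𝓝 0] h) : HasNormalCrossings h :=
  have ⟨α, u, hu, hu0, he⟩ := hg
  ⟨α, u, hu, hu0, hgh.symm.trans he⟩

theorem comp {κ : Type*} [Fintype κ] {π : (κ → ℝ) → ι → ℝ} (hh : HasNormalCrossings h)
    (hπ0 : π 0 = 0) (hπ : ∀ i, HasNormalCrossings fun x => π x i) :
    HasNormalCrossings (h ∘ π) := by
  obtain ⟨α, u, hu, hu0, he⟩ := hh
  have hπa : AnalyticAt ℝ π 0 := AnalyticAt.pi fun i => (hπ i).analyticAt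
  have hmon : HasNormalCrossings (∏ i, (fun x => π x i) ^ α i) :=
    Finset.prod_induction _ HasNormalCrossings (fun _ _ => mul)
      (of_ne_zero analyticAt_const one_ne_zero) fun i _ => (hπ i).pow (α i)
  refine (hmon.mul (of_ne_zero (AnalyticAt.comp (hπ0 ▸ hu) hπa) (by simpa [hπ0]))).congr ?_
  have hπt : Tendsto π (𝓝 0) (𝓝 0) := by simpa only [hπ0] using hπa.continuousAt.tendsto
  filter_upwards [hπt.eventually he] with x hx
  simpa [mon, Finset.prod_apply] using! hx.symm

theorem not_eventuallyEq_zero (hh : HasNormalCrossings h) : ¬ h =ᶠ[𝓝 0] 0 := by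
  obtain ⟨α, u, hu, hu0, he⟩ := hh
  exact fun h0 => (eventuallyEq_zero_or_eventuallyEq_zero_of_mul (analyticAt_mon α 0) hu
    (he.symm.trans h0)).elim (mon_not_eventuallyEq_zero α) (not_eventuallyEq_zero_of_ne hu0)

end HasNormalCrossings

section Factors

variable {ι : Type*} [Fintype ι] {a b w : (ι → ℝ) → ℝ}

theorem coord_dvd_of_vanishing [DecidableEq ι] (ha : AnalyticAt ℝ a 0) (j : ι)
    (h : ∀ᶠ x in 𝓝 0, a (Function.update x j 0) = 0) :
    ∃ q, AnalyticAt ℝ q 0 ∧ a =ᶠ[𝓝 0] (fun x => x j) * q := by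
  obtain ⟨q, hq, heq⟩ := exists_eq_comp_add_mul ha (.proj j) (Pi.single j 1)
  refine ⟨q, hq, ?_⟩
  filter_upwards [heq, h] with x hx h0
  have hproj : x - x j • Pi.single j 1 = Function.update x j 0 := by
    ext i
    rcases eq_or_ne i j with rfl | hi <;> simp [*]
  simpa [hproj, h0] using hx

theorem coord_dvd_left_or_right (ha : AnalyticAt ℝ a 0) (hb : AnalyticAt ℝ b 0)
    (hw : AnalyticAt ℝ w 0) {j : ι} (h : a * b =ᶠ[𝓝 0] (fun x => x j) * w) :
    (∃ q, AnalyticAt ℝ q 0 ∧ a =ᶠ[𝓝 0] (fun x => x j) * q ∧ q * b =ᶠ[𝓝 0] w) ∨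
      ∃ q, AnalyticAt ℝ q 0 ∧ b =ᶠ[𝓝 0] (fun x => x j) * q ∧ a * q =ᶠ[𝓝 0] w := by
  classical
  let P : (ι → ℝ) → ι → ℝ := fun x => Function.update x j 0
  have hP0 : P 0 = 0 := Function.update_eq_self j (0 : ι → ℝ)
  have hP : AnalyticAt ℝ P 0 := by
    refine AnalyticAt.pi fun i => ?_
    rcases eq_or_ne i j with rfl | hi
    · simpa [P] using analyticAt_const
    · simpa [P, hi] using analyticAt_coord i 0
  have hcoord := HasNormalCrossings.not_eventuallyEq_zero (.of_coord j)
  have hprod : (a ∘ P) * (b ∘ P) =ᶠ[𝓝 0] 0 := by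
    have hPt : Tendsto P (𝓝 0) (𝓝 0) := by simpa only [hP0] using hP.continuousAt.tendsto
    filter_upwards [hPt.eventually h] with x hx
    simpa [P] using hx
  rw [← hP0] at ha hb
  refine (eventuallyEq_zero_or_eventuallyEq_zero_of_mul (ha.comp hP) (hb.comp hP) hprod).imp
    (fun h0 => ?_) (fun h0 => ?_) <;> rw [hP0] at ha hb
  · obtain ⟨q, hq, heq⟩ := coord_dvd_of_vanishing ha j h0
    refine ⟨q, hq, heq, eventuallyEq_of_mul_left_cancel (analyticAt_coord j 0) hcoord
      (hq.mul hb) hw ?_⟩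
    exact mul_assoc _ q b ▸ (heq.symm.mul .rfl).trans h
  · obtain ⟨q, hq, heq⟩ := coord_dvd_of_vanishing hb j h0
    refine ⟨q, hq, heq, eventuallyEq_of_mul_left_cancel (analyticAt_coord j 0) hcoord
      (ha.mul hq) hw ?_⟩
    exact mul_left_comm _ a q ▸ (EventuallyEq.rfl.mul heq.symm).trans h

theorem HasNormalCrossings.of_mul_eq_mon_mul (α : ι → ℕ) (ha : AnalyticAt ℝ a 0)
    (hb : AnalyticAt ℝ b 0) {u : (ι → ℝ) → ℝ} (hu : AnalyticAt ℝ u 0) (hu0 : u 0 ≠ 0)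
    (h : a * b =ᶠ[𝓝 0] mon α * u) : HasNormalCrossings a := by
  classical
  induction hN : ∑ i, α i generalizing α a b with
  | zero =>
    obtain rfl : α = 0 := by simpa [funext_iff] using hN
    refine of_ne_zero ha fun ha0 => hu0 ?_
    simpa [mon_zero, ha0, eq_comm] using h.self_of_nhds
  | succ N ih =>
    obtain ⟨j, -, hj⟩ := Finset.exists_ne_zero_of_sum_ne_zero (hN.trans_ne N.succ_ne_zero)
    have hα := single_add_sub hj
    set α' := α - Pi.single j 1
    have hN' : ∑ i, α' i = N := by
      rw [← hα] at hN
      simpa [Finset.sum_add_distrib, add_comm 1] using hN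
    have hsplit : a * b =ᶠ[𝓝 0] (fun x => x j) * (mon α' * u) := by
      filter_upwards [h] with x hx
      rw [hx, ← hα, Pi.mul_apply, mon_add, mon_single, pow_one, mul_assoc]
      rfl
    rcases coord_dvd_left_or_right ha hb ((analyticAt_mon α' 0).mul hu) hsplit with
      ⟨q, hq, haq, hqb⟩ | ⟨q, hq, -, haq⟩
    · exact ((of_coord j).mul (ih α' hq hb hqb hN')).congr haq.symm
    · exact ih α' ha hq haq hN'

theorem HasNormalCrossings.of_mul (h : HasNormalCrossings (a * b)) (ha : AnalyticAt ℝ a 0)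
    (hb : AnalyticAt ℝ b 0) : HasNormalCrossings a :=
  have ⟨α, _, hu, hu0, he⟩ := h
  of_mul_eq_mon_mul α ha hb hu hu0 he

theorem HasNormalCrossings.of_prod {κ : Type*} {s : Finset κ} {g : κ → (ι → ℝ) → ℝ}
    (h : HasNormalCrossings (∏ k ∈ s, g k)) (hg : ∀ k ∈ s, AnalyticAt ℝ (g k) 0) {k : κ}
    (hk : k ∈ s) : HasNormalCrossings (g k) := by
  classical
  rw [← Finset.mul_prod_erase s g hk] at h
  exact h.of_mul (hg k hk) (Finset.analyticAt_prod _ fun l hl => hg l (Finset.mem_of_mem_erase hl))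

/-- Along the points whose coordinates outside the support of `β` vanish only the second monomial
survives, so the difference cannot vanish on `x k = 0`. -/
theorem not_eventually_vanishing_of_disjoint {α β : ι → ℕ} {u v : (ι → ℝ) → ℝ}
    (hv : ContinuousAt v 0) (hv0 : v 0 ≠ 0) {i k : ι} (hαi : α i ≠ 0) (hβi : β i = 0)
    (hβk : β k = 0) : ¬ ∀ᶠ x in 𝓝 0, x k = 0 → (mon α * u - mon β * v) x = 0 := by
  intro h
  let c : ℝ → ι → ℝ := fun t l => if β l = 0 then 0 else t
  have hc : Tendsto c (𝓝[≠] 0) (𝓝 0) := tendsto_pi_nhds.2 fun l => by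
    by_cases hl : β l = 0
    · simp [c, hl]
    · simpa [c, hl] using! tendsto_nhdsWithin_of_tendsto_nhds tendsto_id
  obtain ⟨t, ⟨ht, hvt⟩, ht0⟩ :=
    ((hc.eventually (h.and (hv.eventually_ne hv0))).and eventually_mem_nhdsWithin).exists
  have hβ : mon β (c t) ≠ 0 := mon_ne_zero fun l hl => by simpa [c, hl] using ht0
  have hα : mon α (c t) = 0 := mon_eq_zero hαi (by simp [c, hβi])
  simpa [hα, hβ, hvt] using ht (by simp [c, hβk])

theorem exists_eventually_vanishing {g : (ι → ℝ) → ℝ} (i : ι) (h0 : g 0 = 0)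
    (h : g =ᶠ[𝓝 0] 0 ∨ HasNormalCrossings g) : ∃ k, ∀ᶠ x in 𝓝 0, x k = 0 → g x = 0 := by
  rcases h with h | ⟨γ, w, -, hw0, he⟩
  · exact ⟨i, h.mono fun x hx _ => hx⟩
  · obtain ⟨k, hk⟩ : ∃ k, γ k ≠ 0 := by
      by_contra! hγ
      obtain rfl : γ = 0 := funext hγ
      exact hw0 (by simpa [mon_zero, h0, eq_comm] using he.self_of_nhds)
    exact ⟨k, he.mono fun x hx hxk => by simp [hx, mon_eq_zero hk hxk]⟩

theorem HasNormalCrossings.comparable {α β : ι → ℕ} {u v : (ι → ℝ) → ℝ} (hu : AnalyticAt ℝ u 0)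
    (hv : AnalyticAt ℝ v 0) (hu0 : u 0 ≠ 0) (hv0 : v 0 ≠ 0)
    (h : mon α * u - mon β * v =ᶠ[𝓝 0] 0 ∨ HasNormalCrossings (mon α * u - mon β * v)) :
    α ≤ β ∨ β ≤ α := by
  by_contra! hcon
  simp only [Pi.le_def, not_forall, not_le] at hcon
  obtain ⟨⟨i, hi⟩, j, hj⟩ := hcon
  have hmon : ∀ {δ : ι → ℕ}, α ⊓ β ≤ δ → ∀ x, mon δ x = mon (α ⊓ β) x * mon (δ - α ⊓ β) x :=
    fun {δ} hδ x => by rw [← mon_add, add_tsub_cancel_of_le hδ]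
  let α' := α - α ⊓ β
  let β' := β - α ⊓ β
  have hdisj : ∀ k, α' k = 0 ∨ β' k = 0 := fun k => by
    simp only [α', β', Pi.sub_apply, Pi.inf_apply]; omega
  have hα'i : α' i ≠ 0 := by simp only [α', Pi.sub_apply, Pi.inf_apply]; omega
  have hβ'j : β' j ≠ 0 := by simp only [β', Pi.sub_apply, Pi.inf_apply]; omega
  have hβ'i := (hdisj i).resolve_left hα'i
  have hα'j := (hdisj j).resolve_right hβ'j
  let g : (ι → ℝ) → ℝ := mon α' * u - mon β' * v
  have hg : AnalyticAt ℝ g 0 :=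
    ((analyticAt_mon α' 0).mul hu).sub ((analyticAt_mon β' 0).mul hv)
  have hfactor : mon α * u - mon β * v = mon (α ⊓ β) * g := by
    ext x
    simp only [g, Pi.sub_apply, Pi.mul_apply, hmon inf_le_left x, hmon inf_le_right x]
    ring
  rw [hfactor] at h
  have hg' : g =ᶠ[𝓝 0] 0 ∨ HasNormalCrossings g :=
    h.imp (fun h0 => (eventuallyEq_zero_or_eventuallyEq_zero_of_mul (analyticAt_mon _ 0) hg
      h0).resolve_left (mon_not_eventuallyEq_zero _)) fun hnc =>
      HasNormalCrossings.of_mul (mul_comm _ g ▸ hnc) hg (analyticAt_mon _ 0)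
  have hg0 : g 0 = 0 := by
    simp [g, mon_eq_zero hα'i, mon_eq_zero hβ'j]
  obtain ⟨k, hk⟩ := exists_eventually_vanishing i hg0 hg'
  rcases hdisj k with hαk | hβk
  · refine not_eventually_vanishing_of_disjoint (u := v) hu.continuousAt hu0 hβ'j hα'j hαk ?_
    filter_upwards [hk] with x hx hxk
    simpa [g, sub_eq_zero, eq_comm (a := mon β' x * v x)] using hx hxk
  · exact not_eventually_vanishing_of_disjoint hv.continuousAt hv0 hα'i hβ'i hβk hk

end Factors

/-! ### Lifting points along an ultrafilter -/

/-- The points `p k`, indexed along a filter, are the images under an analytic map `π` fixing the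
origin of points `q k` tending to the origin. -/
structure Lift {K E F : Type*} [NormedAddCommGroup E] [NormedSpace ℝ E] [NormedAddCommGroup F]
    [NormedSpace ℝ F] (l : Filter K) (p : K → F) (π : E → F) (q : K → E) : Prop where
  analyticAt : AnalyticAt ℝ π 0
  map_zero : π 0 = 0
  tendsto : Tendsto q l (𝓝 0)
  eventually_eq : ∀ᶠ k in l, p k = π (q k)

namespace Lift

variable {K E F G : Type*} [NormedAddCommGroup E] [NormedSpace ℝ E] [NormedAddCommGroup F]
  [NormedSpace ℝ F] [NormedAddCommGroup G] [NormedSpace ℝ G] {l : Filter K} {p : K → F}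
  {π : E → F} {q : K → E}

theorem refl (hp : Tendsto p l (𝓝 0)) : Lift l p id p :=
  ⟨analyticAt_id, rfl, hp, .of_forall fun _ => rfl⟩

theorem trans (h : Lift l p π q) {σ : G → E} {r : K → G} (h' : Lift l q σ r) :
    Lift l p (π ∘ σ) r where
  analyticAt := AnalyticAt.comp (h'.map_zero ▸ h.analyticAt) h'.analyticAt
  map_zero := by simp [h.map_zero, h'.map_zero]
  tendsto := h'.tendsto
  eventually_eq := by
    filter_upwards [h.eventually_eq, h'.eventually_eq] with k hk hk'
    rw [hk, hk', Function.comp_apply]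

theorem tendsto_nhds (h : Lift l p π q) : Tendsto π (𝓝 0) (𝓝 0) := by
  simpa only [h.map_zero] using h.analyticAt.continuousAt.tendsto

theorem comp_analyticAt (h : Lift l p π q) {g : F → G} (hg : AnalyticAt ℝ g 0) :
    AnalyticAt ℝ (g ∘ π) 0 :=
  AnalyticAt.comp (h.map_zero.symm ▸ hg) h.analyticAt

theorem of_continuousLinearEquiv (e : E ≃L[ℝ] F) (hp : Tendsto p l (𝓝 0)) :
    Lift l p e (e.symm ∘ p) where
  analyticAt := e.analyticAt 0
  map_zero := _root_.map_zero e
  tendsto := by simpa using (e.symm.continuous.tendsto 0).comp hp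
  eventually_eq := .of_forall fun k => by simp

theorem prodMap {p : K → G × F} (h : Lift l (fun k => (p k).2) π q)
    (hp : Tendsto p l (𝓝 0)) :
    Lift l p (Prod.map id π) fun k => ((p k).1, q k) where
  analyticAt := analyticAt_fst.prod
    (AnalyticAt.fun_comp (f := Prod.snd) (x := (0 : G × E)) h.analyticAt analyticAt_snd)
  map_zero := by simp [Prod.ext_iff, h.map_zero]
  tendsto := ((continuous_fst.tendsto 0).comp hp).prodMk_nhds h.tendsto
  eventually_eq := by
    filter_upwards [h.eventually_eq] with k hk
    simp [← hk]

end Lift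

/-- The points `p k` lift along an analytic map from `ℝ ^ m` that turns the germ of `h` into one
with normal crossings. -/
def UniformizableAlong {K E : Type*} [NormedAddCommGroup E] [NormedSpace ℝ E] (l : Filter K)
    (m : ℕ) (p : K → E) (h : E → ℝ) : Prop :=
  ∃ (π : (Fin m → ℝ) → E) (q : K → Fin m → ℝ), Lift l p π q ∧ HasNormalCrossings (h ∘ π)

/-- Local uniformization along `l`: every nonzero analytic germ at the origin of `E` is
uniformizable, by maps from `ℝ ^ m`, along every family of points tending to the origin. -/
def HasLocalUniformization {K : Type*} (l : Filter K) (E : Type*) [NormedAddCommGroup E]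
    [NormedSpace ℝ E] (m : ℕ) : Prop :=
  ∀ (p : K → E) (h : E → ℝ), Tendsto p l (𝓝 0) → AnalyticAt ℝ h 0 → ¬ h =ᶠ[𝓝 0] 0 →
    UniformizableAlong l m p h

section Uniformization

variable {K E F : Type*} [NormedAddCommGroup E] [NormedSpace ℝ E] [NormedAddCommGroup F]
  [NormedSpace ℝ F] {l : Filter K} {m : ℕ}

theorem UniformizableAlong.of_lift {p : K → F} {π : E → F} {q : K → E} {h : F → ℝ}
    (hπ : Lift l p π q) (hh : UniformizableAlong l m q (h ∘ π)) : UniformizableAlong l m p h :=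
  have ⟨σ, r, hσ, hnc⟩ := hh
  ⟨π ∘ σ, r, hπ.trans hσ, hnc⟩

theorem UniformizableAlong.congr {p : K → E} {g h : E → ℝ} (hg : UniformizableAlong l m p g)
    (hgh : g =ᶠ[𝓝 0] h) : UniformizableAlong l m p h :=
  have ⟨π, q, hπ, hnc⟩ := hg
  ⟨π, q, hπ, hnc.congr (hπ.tendsto_nhds.eventually hgh)⟩

/-- Uniformize the product of the nonzero members of `s`. -/
theorem HasLocalUniformization.exists_lift_of_finite (hE : HasLocalUniformization l E m)
    {p : K → E} (hp : Tendsto p l (𝓝 0)) {s : Set (E → ℝ)} (hs : s.Finite)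
    (han : ∀ g ∈ s, AnalyticAt ℝ g 0) :
    ∃ (π : (Fin m → ℝ) → E) (q : K → Fin m → ℝ), Lift l p π q ∧
      ∀ g ∈ s, g =ᶠ[𝓝 0] 0 ∨ HasNormalCrossings (g ∘ π) := by
  have hfin : {g ∈ s | ¬ g =ᶠ[𝓝 0] 0}.Finite := hs.subset (sep_subset _ _)
  have hmem : ∀ g, g ∈ hfin.toFinset ↔ g ∈ s ∧ ¬ g =ᶠ[𝓝 0] 0 := by simp
  obtain ⟨π, q, hπ, hnc⟩ := hE p (∏ g ∈ hfin.toFinset, g) hp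
    (Finset.analyticAt_prod _ fun g hg => han g ((hmem g).1 hg).1)
    (prod_not_eventuallyEq_zero (fun g hg => han g ((hmem g).1 hg).1)
      fun g hg => ((hmem g).1 hg).2)
  refine ⟨π, q, hπ, fun g hg => or_iff_not_imp_left.2 fun hg0 => ?_⟩
  have hcomp : (∏ g ∈ hfin.toFinset, g) ∘ π = ∏ g ∈ hfin.toFinset, g ∘ π := by
    ext x; simp [Finset.prod_apply]
  rw [hcomp] at hnc
  exact hnc.of_prod (g := fun g => g ∘ π)
    (fun g hg => hπ.comp_analyticAt (han g ((hmem g).1 hg).1)) ((hmem g).2 ⟨hg, hg0⟩)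

end Uniformization

section Ramification

variable {ι : Type*} [Fintype ι] {σ : ι → ℝ} {N : ℕ}

theorem analyticAt_ramify (σ : ι → ℝ) (N : ℕ) (x : ι → ℝ) :
    AnalyticAt ℝ (fun (y : ι → ℝ) i => σ i * y i ^ N) x :=
  analyticAt_pi_iff.2 fun i => analyticAt_const.mul ((analyticAt_coord i x).pow N)

theorem mon_ramify (σ : ι → ℝ) (N : ℕ) (α : ι → ℕ) (y : ι → ℝ) :
    mon α (fun i => σ i * y i ^ N) = mon α σ * mon (N • α) y := by
  simp only [mon, mul_pow, Finset.prod_mul_distrib, Pi.smul_apply, smul_eq_mul, ← pow_mul]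

theorem exists_comp_ramify_eq (hN : N ≠ 0) (hσ : ∀ i, σ i ≠ 0) {α : ι → ℕ}
    {u h : (ι → ℝ) → ℝ} (hu : AnalyticAt ℝ u 0) (he : h =ᶠ[𝓝 0] mon α * u) :
    ∃ v : (ι → ℝ) → ℝ, AnalyticAt ℝ v 0 ∧ (u 0 ≠ 0 → v 0 ≠ 0) ∧
      h ∘ (fun y i => σ i * y i ^ N) =ᶠ[𝓝 0] mon (N • α) * v := by
  let ρ : (ι → ℝ) → ι → ℝ := fun y i => σ i * y i ^ N
  have hρ : AnalyticAt ℝ ρ 0 := analyticAt_ramify σ N 0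
  have hρ0 : ρ 0 = 0 := by ext i; simp [ρ, hN]
  have hρt : Tendsto ρ (𝓝 0) (𝓝 0) := by simpa only [hρ0] using hρ.continuousAt.tendsto
  refine ⟨fun y => mon α σ * u (ρ y), analyticAt_const.mul (AnalyticAt.fun_comp (by rwa [hρ0]) hρ),
    fun hu0 => mul_ne_zero (mon_ne_zero fun i _ => hσ i) (by rwa [hρ0]), ?_⟩
  filter_upwards [hρt.eventually he] with y hy
  simp only [Function.comp_apply, Pi.mul_apply] at hy ⊢
  rw [hy, mon_ramify]
  ring

theorem exists_lift_ramify {K : Type*} (𝒰 : Ultrafilter K) {p : K → ι → ℝ}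
    (hp : Tendsto p 𝒰 (𝓝 0)) (hN : N ≠ 0) :
    ∃ (σ : ι → ℝ) (q : K → ι → ℝ), (∀ i, σ i ≠ 0) ∧
      Lift 𝒰 p (fun y i => σ i * y i ^ N) q := by
  have hsign : ∀ i, ∃ s : ℝ, s ≠ 0 ∧ ∀ᶠ k in (𝒰 : Filter K), p k i = s * |p k i| := fun i => by
    rcases 𝒰.em fun k => 0 ≤ p k i with h | h
    · exact ⟨1, one_ne_zero, h.mono fun k hk => by rw [abs_of_nonneg hk, one_mul]⟩
    · exact ⟨-1, by simp, h.mono fun k hk => by rw [abs_of_neg (not_le.1 hk)]; ring⟩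
  choose σ hσ hσp using hsign
  refine ⟨σ, fun k i => |p k i| ^ (1 / (N : ℝ)), hσ, analyticAt_ramify σ N 0, ?_, ?_, ?_⟩
  · ext i; simp [hN]
  · rw [tendsto_pi_nhds] at hp ⊢
    intro i
    have hroot : Continuous fun x : ℝ => |x| ^ (1 / (N : ℝ)) :=
      continuous_abs.rpow_const fun _ => Or.inr (by positivity)
    simpa [hN] using! (hroot.tendsto 0).comp (hp i)
  · filter_upwards [eventually_all.2 hσp] with k hk
    ext i
    rw [one_div, Real.rpow_inv_natCast_pow (abs_nonneg _) hN]
    exact hk i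

end Ramification

section Preparation

variable {ι κ : Type*} [Finite κ]

theorem exists_forall_nsmul_le_nsmul {c : κ → ℕ} (hc : ∀ i, c i ≠ 0) {α : κ → ι → ℕ}
    {s : Set κ} (hs : s.Nonempty)
    (hα : ∀ i ∈ s, ∀ j ∈ s, c j • α i ≤ c i • α j ∨ c i • α j ≤ c j • α i) :
    ∃ i ∈ s, ∀ j ∈ s, c j • α i ≤ c i • α j := by
  let slope : κ → ι → ℚ := fun i l => α i l / c i
  have hslope : ∀ i j, slope i ≤ slope j ↔ c j • α i ≤ c i • α j := fun i j => by
    have hpos : ∀ i, (0 : ℚ) < c i := fun i => by exact_mod_cast Nat.pos_of_ne_zero (hc i)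
    refine forall_congr' fun l => ?_
    rw [div_le_div_iff₀ (hpos i) (hpos j), mul_comm, mul_comm (α j l : ℚ)]
    exact_mod_cast Iff.rfl
  obtain ⟨i, his, hi⟩ := s.toFinite.exists_minimalFor slope s hs
  refine ⟨i, his, fun j hj => (hα i his j hj).elim id fun hji => ?_⟩
  exact (hslope i j).1 (hi hj ((hslope j i).2 hji))

theorem exists_minimal_slope [Fintype ι] {c : κ → ℕ} (hc : ∀ i, c i ≠ 0)
    {a : κ → (ι → ℝ) → ℝ} (ha : ∀ i, a i =ᶠ[𝓝 0] 0 ∨ HasNormalCrossings (a i))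
    (hdiff : ∀ i j, a i ^ c j - a j ^ c i =ᶠ[𝓝 0] 0 ∨
      HasNormalCrossings (a i ^ c j - a j ^ c i))
    (hne : ∃ i, HasNormalCrossings (a i)) :
    ∃ (α : κ → ι → ℕ) (u : κ → (ι → ℝ) → ℝ) (i₀ : κ), (∀ i, AnalyticAt ℝ (u i) 0) ∧
      (∀ i, a i =ᶠ[𝓝 0] mon (α i) * u i) ∧ u i₀ 0 ≠ 0 ∧ ∀ i, c i • α i₀ ≤ c i₀ • α i := by
  classical
  let s : Set κ := {i | HasNormalCrossings (a i)}
  have hs : ∀ i, ∃ (α : ι → ℕ) (u : (ι → ℝ) → ℝ), i ∈ s →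
      AnalyticAt ℝ u 0 ∧ u 0 ≠ 0 ∧ a i =ᶠ[𝓝 0] mon α * u := fun i =>
    if hi : i ∈ s then have ⟨α, u, h⟩ := hi; ⟨α, u, fun _ => h⟩ else ⟨0, 0, (absurd · hi)⟩
  choose α u h using hs
  have hcomp : ∀ i ∈ s, ∀ j ∈ s, c j • α i ≤ c i • α j ∨ c i • α j ≤ c j • α i := by
    intro i hi j hj
    obtain ⟨hui, hui0, hei⟩ := h i hi
    obtain ⟨huj, huj0, hej⟩ := h j hj
    have he : a i ^ c j - a j ^ c i =ᶠ[𝓝 0]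
        mon (c j • α i) * u i ^ c j - mon (c i • α j) * u j ^ c i := by
      filter_upwards [hei, hej] with x hxi hxj
      simp only [Pi.sub_apply, Pi.mul_apply, Pi.pow_apply, hxi, hxj, mul_pow, mon_nsmul]
    exact HasNormalCrossings.comparable (hui.pow _) (huj.pow _) (pow_ne_zero _ hui0)
      (pow_ne_zero _ huj0) ((hdiff i j).imp he.symm.trans (·.congr he))
  obtain ⟨i₀, hi₀ : i₀ ∈ s, hmin⟩ := exists_forall_nsmul_le_nsmul hc hne hcomp
  refine ⟨fun i => if i ∈ s then α i else c i • α i₀, fun i => if i ∈ s then u i else 0, i₀,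
    fun i => ?_, fun i => ?_, by simpa only [if_pos hi₀] using (h i₀ hi₀).2.1, fun i => ?_⟩ <;>
    by_cases hi : i ∈ s <;>
    simp only [hi, hi₀, if_true, if_false]
  · exact (h i hi).1
  · exact analyticAt_const
  · exact (h i hi).2.2
  · simpa using (ha i).resolve_right hi
  · exact hmin i hi
  · exact le_self_nsmul zero_le (hc i₀)

/-- Weighted preparation: after a substitution the least of the slopes, the exponent of `a i`
divided by the weight `c i`, is attained, and integral after ramification. -/
theorem exists_weighted_preparation {K : Type*} {𝒰 : Ultrafilter K} {E : Type*}
    [NormedAddCommGroup E] [NormedSpace ℝ E] {m : ℕ}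
    (hE : HasLocalUniformization (𝒰 : Filter K) E m) {p : K → E} (hp : Tendsto p 𝒰 (𝓝 0))
    {c : κ → ℕ} (hc : ∀ i, c i ≠ 0) {a : κ → E → ℝ}
    (ha : ∀ i, AnalyticAt ℝ (a i) 0) (ha0 : ∀ i, a i 0 = 0) (hne : ∃ i, ¬ a i =ᶠ[𝓝 0] 0)
    {b : E → ℝ} (hb : AnalyticAt ℝ b 0) (hb0 : ¬ b =ᶠ[𝓝 0] 0) :
    ∃ (π : (Fin m → ℝ) → E) (q : K → Fin m → ℝ) (β : Fin m → ℕ) (a' : κ → (Fin m → ℝ) → ℝ),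
      Lift 𝒰 p π q ∧ HasNormalCrossings (b ∘ π) ∧ β ≠ 0 ∧ (∀ i, AnalyticAt ℝ (a' i) 0) ∧
      (∀ i, a i ∘ π =ᶠ[𝓝 0] mon β ^ c i * a' i) ∧ ∃ i, a' i 0 ≠ 0 := by
  obtain ⟨π, q, hπ, hnc⟩ := hE.exists_lift_of_finite hp
    (s := {b} ∪ range a ∪ range fun ij : κ × κ => a ij.1 ^ c ij.2 - a ij.2 ^ c ij.1)
    (((finite_singleton b).union (finite_range _)).union (finite_range _)) (by
      rintro _ ((rfl | ⟨i, rfl⟩) | ⟨ij, rfl⟩)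
      exacts [hb, ha i, ((ha _).pow _).sub ((ha _).pow _)])
  have haπ := fun i => (hnc (a i) (.inl (.inr ⟨i, rfl⟩))).imp_left hπ.tendsto_nhds.eventually
  have hdiff := fun i j => (hnc _ (.inr ⟨(i, j), rfl⟩)).imp_left hπ.tendsto_nhds.eventually
  have hneπ : ∃ i, HasNormalCrossings (a i ∘ π) :=
    hne.imp fun i hi => (hnc (a i) (.inl (.inr ⟨i, rfl⟩))).resolve_left hi
  have hbπ := (hnc b (.inl (.inl rfl))).resolve_left hb0
  obtain ⟨α, u, i₀, hu, hau, hu0, hα⟩ := exists_minimal_slope hc haπ hdiff hneπ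
  have hα0 : α i₀ ≠ 0 := fun hα0 => hu0 <| by
    simpa [hα0, mon_zero, hπ.map_zero, ha0, eq_comm] using (hau i₀).self_of_nhds
  obtain ⟨σ, r, hσ, hρ⟩ := exists_lift_ramify 𝒰 hπ.tendsto (hc i₀)
  choose v hv hv0 hav using fun i => exists_comp_ramify_eq (hc i₀) hσ (hu i) (hau i)
  refine ⟨_, r, α i₀, fun i => mon (c i₀ • α i - c i • α i₀) * v i, hπ.trans hρ,
    hbπ.comp hρ.map_zero fun i => (HasNormalCrossings.of_ne_zero analyticAt_const (hσ i)).mul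
      ((HasNormalCrossings.of_coord i).pow _), hα0,
    fun i => (analyticAt_mon _ 0).mul (hv i), fun i => ?_, i₀,
    by simpa [mon_zero] using hv0 i₀ hu0⟩
  filter_upwards [hav i] with y hy
  refine hy.trans ?_
  simp only [Pi.mul_apply, Pi.pow_apply]
  rw [← mul_assoc, ← mon_nsmul, ← mon_add, add_tsub_cancel_of_le (hα i)]

end Preparation

/-! ### Tschirnhaus form -/

theorem eq_zero_of_sum_add_pow_mul_eventuallyEq_zero {d : ℕ} {c : ℕ → ℝ} {u : ℝ → ℝ}
    (hu : ContinuousAt u 0)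
    (h : (fun z => ∑ i ∈ Finset.range d, z ^ i * c i + z ^ d * u z) =ᶠ[𝓝 0] 0) :
    (∀ i < d, c i = 0) ∧ u 0 = 0 := by
  induction d generalizing c with
  | zero => simpa using h.self_of_nhds
  | succ d ih =>
    have hc0 : c 0 = 0 := by simpa [Finset.sum_range_succ'] using h.self_of_nhds
    have hdiv : (fun z => ∑ i ∈ Finset.range d, z ^ i * c (i + 1) + z ^ d * u z) =ᶠ[𝓝[≠] 0] 0 := by
      filter_upwards [h.filter_mono nhdsWithin_le_nhds, self_mem_nhdsWithin] with z hz hz0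
      refine (mul_eq_zero.1 (?_ : z * _ = 0)).resolve_left hz0
      rw [← show _ = (0 : ℝ) from hz, Finset.sum_range_succ', hc0, mul_add, Finset.mul_sum]
      simp only [pow_succ', mul_zero, add_zero, mul_assoc]
    have hcont : ContinuousAt
        (fun z => ∑ i ∈ Finset.range d, z ^ i * c (i + 1) + z ^ d * u z) 0 := by fun_prop
    obtain ⟨hc, hu0⟩ := ih
      ((hcont.eventuallyEq_nhds_iff_eventuallyEq_nhdsNE continuousAt_const).1 hdiv)
    exact ⟨fun i hi => i.casesOn (fun _ => hc0) (fun i hi => hc i (by omega)) hi, hu0⟩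

theorem exists_parametric_taylor {E : Type*} [NormedAddCommGroup E] [NormedSpace ℝ E]
    {h : ℝ × E → ℝ} (hh : AnalyticAt ℝ h 0) (d : ℕ) :
    ∃ (c : ℕ → E → ℝ) (u : ℝ × E → ℝ), (∀ i, AnalyticAt ℝ (c i) 0) ∧ AnalyticAt ℝ u 0 ∧
      h =ᶠ[𝓝 0] fun v => ∑ i ∈ Finset.range d, v.1 ^ i * c i v.2 + v.1 ^ d * u v := by
  induction d with
  | zero => exact ⟨0, h, fun _ => analyticAt_const, hh, .of_eq (by simp)⟩
  | succ d ih =>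
    obtain ⟨c, u, hc, hu, he⟩ := ih
    obtain ⟨q, hq, hqe⟩ := exists_eq_comp_add_mul hu (ContinuousLinearMap.fst ℝ ℝ E) (1, 0)
    refine ⟨Function.update c d fun x => u (0, x), q, fun i => ?_, hq, ?_⟩
    · rcases eq_or_ne i d with rfl | hi
      · rw [Function.update_self]
        exact AnalyticAt.fun_comp (x := (0 : E)) hu (analyticAt_const.prod analyticAt_id)
      · rw [Function.update_of_ne hi]
        exact hc i
    · filter_upwards [he, hqe] with v hv hqv
      have hsum : ∑ i ∈ Finset.range d, v.1 ^ i * Function.update c d (fun x => u (0, x)) i v.2 =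
          ∑ i ∈ Finset.range d, v.1 ^ i * c i v.2 := Finset.sum_congr rfl fun i hi => by
        rw [Function.update_of_ne (Finset.mem_range.1 hi).ne]
      have hproj : v - v.1 • ((1, 0) : ℝ × E) = (0, v.2) := by ext <;> simp
      rw [ContinuousLinearMap.coe_fst', hproj] at hqv
      rw [hv, hqv, Finset.sum_range_succ, hsum, Function.update_self]
      ring

theorem iteratedDeriv_eq_of_eventuallyEq_sum_add_pow_mul {g : ℝ → ℝ} (hg : AnalyticAt ℝ g 0)
    {d : ℕ} {c : ℕ → ℝ} {u : ℝ → ℝ} (hu : ContinuousAt u 0)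
    (h : g =ᶠ[𝓝 0] fun z => ∑ i ∈ Finset.range d, z ^ i * c i + z ^ d * u z) :
    (∀ i < d, iteratedDeriv i g 0 = i.factorial * c i) ∧
      iteratedDeriv d g 0 = d.factorial * u 0 := by
  obtain ⟨F, hF, hFe⟩ := hg.exists_eventuallyEq_sum_add_pow_mul (d + 1)
  have hv : ContinuousAt (fun z => iteratedDeriv d g 0 / d.factorial + z * F z - u z) 0 :=
    (continuousAt_const.add (continuousAt_id.mul hF.continuousAt)).sub hu
  obtain ⟨hc, hd⟩ := eq_zero_of_sum_add_pow_mul_eventuallyEq_zero (d := d)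
    (c := fun i => iteratedDeriv i g 0 / i.factorial - c i) hv <| by
      filter_upwards [h, hFe] with z hz hFz
      rw [hz, Finset.sum_range_succ] at hFz
      simp only [mul_sub, Finset.sum_sub_distrib, smul_eq_mul, Pi.zero_apply] at hFz ⊢
      have hsum : ∑ i ∈ Finset.range d, z ^ i * (iteratedDeriv i g 0 / i.factorial) =
          ∑ i ∈ Finset.range d, z ^ i / i.factorial * iteratedDeriv i g 0 :=
        Finset.sum_congr rfl fun i _ => by ring
      rw [hsum]
      linear_combination -hFz
  refine ⟨fun i hi => ?_, ?_⟩
  · have := hc i hi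
    field_simp at this
    linear_combination this
  · simp only [zero_mul, add_zero] at hd
    field_simp at hd
    linear_combination hd

theorem exists_analyticAt_implicit {E : Type*} [NormedAddCommGroup E] [NormedSpace ℝ E]
    [CompleteSpace E] {g : ℝ × E → ℝ} (hg : AnalyticAt ℝ g 0) (hg0 : g 0 = 0)
    (hd : deriv (fun z => g (z, 0)) 0 ≠ 0) :
    ∃ ψ : E → ℝ, AnalyticAt ℝ ψ 0 ∧ ψ 0 = 0 ∧ ∀ᶠ x in 𝓝 0, g (ψ x, x) = 0 := by
  have hswap : AnalyticAt ℝ (g ∘ Prod.swap) (0 : E × ℝ) :=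
    AnalyticAt.comp (by simpa using hg) (analyticAt_snd.prod analyticAt_fst)
  have hinv : (fderiv ℝ (g ∘ Prod.swap) (0 : E × ℝ) ∘L
      ContinuousLinearMap.inr ℝ E ℝ).IsInvertible := by
    refine ⟨ContinuousLinearEquiv.unitsEquivAut ℝ (Units.mk0 _ hd), ?_⟩
    ext
    have hline : HasDerivAt (fun z : ℝ => ((0 : E), z)) (0, 1) 0 :=
      (hasDerivAt_const _ _).prodMk (hasDerivAt_id _)
    have := hswap.differentiableAt.hasFDerivAt.comp_hasDerivAt (0 : ℝ) hline
    simpa using! this.deriv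
  have hcd : ContDiffAt ℝ ⊤ (g ∘ Prod.swap) (0 : E × ℝ) := hswap.contDiffAt
  refine ⟨hcd.implicitFunction (by simp) hinv,
    (hcd.contDiffAt_implicitFunction (by simp) hinv).analyticAt,
    hcd.implicitFunction_apply_self (by simp) hinv, ?_⟩
  simpa [hg0] using! hcd.eventually_apply_implicitFunction (by simp) hinv

theorem eventually_taylor_coeff_translate {g : ℝ → ℝ} (hg : AnalyticAt ℝ g 0) {d : ℕ}
    {c : ℕ → ℝ → ℝ} {u : ℝ × ℝ → ℝ} (hu : AnalyticAt ℝ u 0)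
    (h : (fun v : ℝ × ℝ => g (v.1 + v.2)) =ᶠ[𝓝 0]
      fun v => ∑ i ∈ Finset.range d, v.1 ^ i * c i v.2 + v.1 ^ d * u v) :
    ∀ᶠ w in 𝓝 0, (∀ i < d, iteratedDeriv i g w = i.factorial * c i w) ∧
      iteratedDeriv d g w = d.factorial * u (0, w) := by
  have hline : Tendsto (fun w : ℝ => ((0 : ℝ), w)) (𝓝 0) (𝓝 0) :=
    (Continuous.prodMk_right (0 : ℝ)).tendsto' 0 0 rfl
  have hcurry : ∀ᶠ w in 𝓝 (0 : ℝ), (fun z => g (z + w)) =ᶠ[𝓝 0]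
      fun z => ∑ i ∈ Finset.range d, z ^ i * c i w + z ^ d * u (z, w) :=
    (((continuous_swap.tendsto' (0 : ℝ × ℝ) 0 rfl).eventually h).curry_nhds :)
  filter_upwards [hcurry, hg.eventually_analyticAt, hline.eventually hu.eventually_analyticAt]
    with w hw hgw huw
  have htaylor := iteratedDeriv_eq_of_eventuallyEq_sum_add_pow_mul (g := fun z => g (z + w))
    (AnalyticAt.fun_comp (by simpa using hgw) (analyticAt_id.add analyticAt_const))
    (huw.continuousAt.comp (f := fun z : ℝ => (z, w)) (by fun_prop)) hw
  simpa only [iteratedDeriv_comp_add_const, zero_add] using! htaylor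

/-- Expanding `h (z + w, x)` in powers of `z`, the coefficient of `z ^ d` vanishes along an
analytic graph `w = ψ x`. -/
theorem exists_tschirnhaus {E : Type*} [NormedAddCommGroup E] [NormedSpace ℝ E] [CompleteSpace E]
    {h : ℝ × E → ℝ} (hh : AnalyticAt ℝ h 0) {d : ℕ}
    (hord : analyticOrderAt (fun z => h (z, 0)) 0 = (d + 1 : ℕ)) :
    ∃ (ψ : E → ℝ) (a : ℕ → E → ℝ) (u : ℝ × E → ℝ), AnalyticAt ℝ ψ 0 ∧ ψ 0 = 0 ∧
      (∀ i, AnalyticAt ℝ (a i) 0) ∧ (∀ i < d + 1, a i 0 = 0) ∧ a d =ᶠ[𝓝 0] 0 ∧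
      AnalyticAt ℝ u 0 ∧ u 0 ≠ 0 ∧ (fun v : ℝ × E => h (v.1 + ψ v.2, v.2)) =ᶠ[𝓝 0]
        fun v => ∑ i ∈ Finset.range (d + 1), v.1 ^ i * a i v.2 + v.1 ^ (d + 1) * u v := by
  have hg : AnalyticAt ℝ (fun z => h (z, 0)) 0 :=
    AnalyticAt.fun_comp (x := (0 : ℝ)) hh (analyticAt_id.prod analyticAt_const)
  have htranslate : AnalyticAt ℝ (fun v : ℝ × ℝ × E => h (v.1 + v.2.1, v.2.2)) 0 :=
    AnalyticAt.fun_comp (x := (0 : ℝ × ℝ × E)) (by simpa using! hh)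
      ((analyticAt_fst.add (analyticAt_fst.comp analyticAt_snd)).prod
        (analyticAt_snd.comp analyticAt_snd))
  obtain ⟨c, u, hc, hu, he⟩ := exists_parametric_taylor htranslate (d + 1)
  have hcoeff := eventually_taylor_coeff_translate hg (c := fun i w => c i (w, 0))
    (u := fun v => u (v.1, v.2, 0))
    (AnalyticAt.fun_comp (x := (0 : ℝ × ℝ)) hu
      (analyticAt_fst.prod (analyticAt_snd.prod analyticAt_const)))
    ((Continuous.tendsto' (f := fun v : ℝ × ℝ => (v.1, v.2, (0 : E))) (by fun_prop) 0 0
      rfl).eventually he)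
  obtain ⟨hlow, htop⟩ := (analyticOrderAt_eq_nat_iff_iteratedDeriv_eq_zero hg).1 hord
  have hc0 : ∀ i < d + 1, c i 0 = 0 := fun i hi => by
    simpa [hlow i hi, Nat.factorial_ne_zero] using! (hcoeff.self_of_nhds.1 i hi).symm
  have hderiv : deriv (fun w => c d (w, 0)) 0 ≠ 0 := by
    have heq : iteratedDeriv d (fun z => h (z, 0)) =ᶠ[𝓝 0]
        fun w => d.factorial * c d (w, 0) := hcoeff.mono fun w hw => hw.1 d d.lt_succ_self
    rw [iteratedDeriv_succ, heq.deriv_eq, deriv_const_mul_field] at htop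
    exact right_ne_zero_of_mul htop
  obtain ⟨ψ, hψ, hψ0, hψc⟩ := exists_analyticAt_implicit (hc d) (hc0 d d.lt_succ_self) hderiv
  have hgraph : AnalyticAt ℝ (fun x => (ψ x, x)) 0 := hψ.prod analyticAt_id
  have hlift : AnalyticAt ℝ (fun v : ℝ × E => (v.1, ψ v.2, v.2)) 0 :=
    analyticAt_fst.prod (AnalyticAt.fun_comp (x := (0 : ℝ × E)) hgraph analyticAt_snd)
  have hlift0 : (0, ψ 0, 0) = (0 : ℝ × ℝ × E) := by simp [hψ0]
  refine ⟨ψ, fun i x => c i (ψ x, x), fun v => u (v.1, ψ v.2, v.2), hψ, hψ0,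
    fun i => AnalyticAt.fun_comp (x := (0 : E)) (by simpa [hψ0] using! hc i) hgraph,
    fun i hi => by simpa [hψ0] using! hc0 i hi, hψc,
    AnalyticAt.fun_comp (x := (0 : ℝ × E)) (hlift0 ▸ hu) hlift, ?_, ?_⟩
  · have hu0 := hcoeff.self_of_nhds.2 ▸ htop
    simpa [hψ0] using! right_ne_zero_of_mul hu0
  · exact (hlift.continuousAt.tendsto.mono_right (congrArg 𝓝 hlift0).le).eventually he

/-! ### Blow-up charts -/

theorem exists_tendsto_eq_mul_or {K : Type*} (𝒰 : Ultrafilter K) (r s : K → ℝ) :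
    (∃ (c : ℝ) (t : K → ℝ), Tendsto t 𝒰 (𝓝 c) ∧ ∀ᶠ k in (𝒰 : Filter K), r k = s k * t k) ∨
      (∀ᶠ k in (𝒰 : Filter K), r k ≠ 0) ∧ Tendsto (fun k => s k / r k) 𝒰 (𝓝 0) := by
  by_cases h : ∃ C, ∀ᶠ k in (𝒰 : Filter K), |r k| ≤ C * |s k|
  · obtain ⟨C, hC⟩ := h
    have hbounded : ∀ᶠ k in (𝒰 : Filter K), r k / s k ∈ Metric.closedBall 0 |C| := by
      filter_upwards [hC] with k hk
      rw [mem_closedBall_zero_iff, norm_div, Real.norm_eq_abs, Real.norm_eq_abs]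
      exact div_le_of_le_mul₀ (abs_nonneg _) (abs_nonneg _)
        (hk.trans (mul_le_mul_of_nonneg_right (le_abs_self C) (abs_nonneg _)))
    obtain ⟨c, -, hc⟩ := (isCompact_closedBall (0 : ℝ) |C|).ultrafilter_le_nhds
      (𝒰.map fun k => r k / s k) (le_principal_iff.2 hbounded)
    refine .inl ⟨c, fun k => r k / s k, hc, hC.mono fun k hk => ?_⟩
    rcases eq_or_ne (s k) 0 with h0 | h0
    · simpa [h0] using hk
    · field_simp
  · have hlarge : ∀ C, ∀ᶠ k in (𝒰 : Filter K), C * |s k| < |r k| := fun C => by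
      simpa only [not_le] using Ultrafilter.eventually_not.2 (not_exists.1 h C)
    have hne : ∀ᶠ k in (𝒰 : Filter K), r k ≠ 0 :=
      (hlarge 0).mono fun k hk => by simpa using hk
    refine .inr ⟨hne, Metric.tendsto_nhds.2 fun ε hε => ?_⟩
    filter_upwards [hne, hlarge (1 / ε)] with k hk hlt
    rw [one_div, inv_mul_lt_iff₀ hε] at hlt
    rwa [dist_zero_right, norm_div, Real.norm_eq_abs, Real.norm_eq_abs,
      div_lt_iff₀ (abs_pos.2 hk)]

theorem ne_zero_of_tendsto_mon_div {ι : Type*} [Fintype ι] {K : Type*} {l : Filter K}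
    [l.NeBot] {o : ι} {β : ι → ℕ} {p : K → ι → ℝ} (hp : Tendsto p l (𝓝 0))
    (hpo : ∀ᶠ k in l, p k o ≠ 0) (hlim : Tendsto (fun k => mon β (p k) / p k o) l (𝓝 0)) :
    β ≠ 0 := by
  rintro rfl
  have hone : Tendsto (fun _ : K => (1 : ℝ)) l (𝓝 0) := by
    refine ((tendsto_pi_nhds.1 hp o).mul hlim |>.congr' ?_).mono_right (by simp)
    filter_upwards [hpo] with k hk
    rw [mon_zero, mul_one_div_cancel hk]
  exact one_ne_zero (tendsto_nhds_unique tendsto_const_nhds hone)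

section Blowup

variable {ι : Type*} [DecidableEq ι]

/-- The affine chart `x i = x' j * (x' i + c)` of the blow-up of `x i = x j = 0`. -/
def blowup (i j : ι) (c : ℝ) (x : ι → ℝ) : ι → ℝ := Function.update x i (x j * (x i + c))

theorem blowup_self (i j : ι) (c : ℝ) (x : ι → ℝ) : blowup i j c x i = x j * (x i + c) :=
  Function.update_self ..

theorem blowup_of_ne {i k : ι} (h : k ≠ i) (j : ι) (c : ℝ) (x : ι → ℝ) :
    blowup i j c x k = x k :=
  Function.update_of_ne h ..

theorem hasNormalCrossings_blowup [Fintype ι] (i j : ι) (c : ℝ) (k : ι) :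
    HasNormalCrossings fun x => blowup i j c x k := by
  rcases eq_or_ne k i with rfl | hk
  · simp only [blowup_self]
    refine (HasNormalCrossings.of_coord j).mul ?_
    rcases eq_or_ne c 0 with rfl | hc
    · simpa only [add_zero] using HasNormalCrossings.of_coord k
    · exact .of_ne_zero ((analyticAt_coord k 0).add analyticAt_const) (by simpa using hc)
  · simpa only [blowup_of_ne hk] using HasNormalCrossings.of_coord k

theorem lift_blowup [Fintype ι] {K : Type*} {l : Filter K} {p : K → ι → ℝ} {i j : ι} (hij : j ≠ i)
    (hp : Tendsto p l (𝓝 0)) {t : K → ℝ} {c : ℝ} (ht : Tendsto t l (𝓝 c))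
    (h : ∀ᶠ k in l, p k i = p k j * t k) :
    Lift l p (blowup i j c) fun k => Function.update (p k) i (t k - c) where
  analyticAt := AnalyticAt.pi fun k => (hasNormalCrossings_blowup i j c k).analyticAt
  map_zero := by simp [blowup]
  tendsto := by simpa using hp.update i (ht.sub_const c)
  eventually_eq := by
    filter_upwards [h] with k hk
    simp [blowup, Function.update_of_ne hij, ← hk]

theorem mon_blowup [Fintype ι] {α : ι → ℕ} {i : ι} (hα : α i = 0) (j : ι) (c : ℝ) (x : ι → ℝ) :
    mon α (blowup i j c x) = mon α x :=
  mon_congr fun _ hk => blowup_of_ne (by rintro rfl; exact hk hα) j c x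

theorem tendsto_mon_div_of_lift_blowup [Fintype ι] {K : Type*} {l : Filter K} {j o : ι}
    (hjo : j ≠ o) {β : ι → ℕ} (hβo : β o = 0) {p q : K → ι → ℝ} (hlift : Lift l p (blowup o j 0) q)
    (hpo : ∀ᶠ k in l, p k o ≠ 0)
    (hlim : Tendsto (fun k => mon (Pi.single j 1 + β) (p k) / p k o) l (𝓝 0)) :
    (∀ᶠ k in l, q k o ≠ 0) ∧ Tendsto (fun k => mon β (q k) / q k o) l (𝓝 0) := by
  have hfactor : ∀ᶠ k in l, q k j ≠ 0 ∧ q k o ≠ 0 := by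
    filter_upwards [hlift.eventually_eq, hpo] with k hk hko
    rwa [hk, blowup_self, add_zero, mul_ne_zero_iff] at hko
  refine ⟨hfactor.mono fun _ hk => hk.2, hlim.congr' ?_⟩
  filter_upwards [hlift.eventually_eq, hfactor] with k hk hne
  rw [hk, mon_single_add, mon_blowup hβo, blowup_of_ne hjo, blowup_self, add_zero,
    mul_div_mul_left _ _ hne.1]

theorem exists_mon_comp_blowup_eq_mul [Fintype ι] {K : Type*} {l : Filter K} [l.NeBot] {j o : ι}
    (hoj : o ≠ j) {β : ι → ℕ} {p q : K → ι → ℝ} {c : ℝ} (hlift : Lift l p (blowup j o c) q)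
    (hpo : ∀ᶠ k in l, p k o ≠ 0)
    (hlim : Tendsto (fun k => mon (Pi.single j 1 + β) (p k) / p k o) l (𝓝 0)) :
    ∃ w : (ι → ℝ) → ℝ, AnalyticAt ℝ w 0 ∧ w 0 = 0 ∧
      mon (Pi.single j 1 + β) ∘ blowup j o c =ᶠ[𝓝 0] (fun x => blowup j o c x o) * w := by
  have hw : AnalyticAt ℝ (fun x => (x j + c) * mon β (blowup j o c x)) 0 :=
    ((analyticAt_coord j 0).add analyticAt_const).mul
      (AnalyticAt.fun_comp (analyticAt_mon β _) hlift.analyticAt)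
  have heq : ∀ x, mon (Pi.single j 1 + β) (blowup j o c x) =
      blowup j o c x o * ((x j + c) * mon β (blowup j o c x)) := fun x => by
    rw [mon_single_add, blowup_self, blowup_of_ne hoj, mul_assoc]
  refine ⟨_, hw, tendsto_nhds_unique (hw.continuousAt.tendsto.comp hlift.tendsto)
    (hlim.congr' ?_), .of_forall heq⟩
  filter_upwards [hlift.eventually_eq, hpo] with k hk hko
  rw [div_eq_iff hko, hk, heq, mul_comm, Function.comp_apply]

/-- If `mon β x = o(x o)` along the points, then after a composite of blow-up charts `x o` divides
`mon β x`. The induction is on the degree of `β`: compare `x o` with a coordinate `x j` occurring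
in `mon β`, and blow up `x o = x j = 0`. -/
theorem exists_lift_coord_dvd_mon {ι : Type*} [Fintype ι] {K : Type*} {𝒰 : Ultrafilter K} {o : ι}
    {β : ι → ℕ} (hβo : β o = 0) {p : K → ι → ℝ} (hp : Tendsto p 𝒰 (𝓝 0))
    (hpo : ∀ᶠ k in (𝒰 : Filter K), p k o ≠ 0)
    (hlim : Tendsto (fun k => mon β (p k) / p k o) 𝒰 (𝓝 0)) :
    ∃ (π : (ι → ℝ) → ι → ℝ) (q : K → ι → ℝ) (w : (ι → ℝ) → ℝ), Lift 𝒰 p π q ∧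
      (∀ i, HasNormalCrossings fun x => π x i) ∧ AnalyticAt ℝ w 0 ∧ w 0 = 0 ∧
      mon β ∘ π =ᶠ[𝓝 0] (fun x => π x o) * w := by
  classical
  have hβ := ne_zero_of_tendsto_mon_div hp hpo hlim
  induction hN : ∑ i, β i generalizing β p with
  | zero => exact absurd (funext (by simpa using hN)) hβ
  | succ N ih =>
    obtain ⟨j, hj⟩ := Function.ne_iff.1 hβ
    have hjo : j ≠ o := fun h => hj (h ▸ hβo)
    obtain ⟨β', rfl⟩ : ∃ β' : ι → ℕ, β = Pi.single j 1 + β' := ⟨_, (single_add_sub hj).symm⟩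
    have hβ'o : β' o = 0 := by simpa [hjo.symm] using hβo
    rcases exists_tendsto_eq_mul_or 𝒰 (fun k => p k j) fun k => p k o with
      ⟨c, t, ht, hpt⟩ | ⟨hne, hl⟩
    · have hlift := lift_blowup hjo.symm hp ht hpt
      obtain ⟨w, hw, hw0, he⟩ := exists_mon_comp_blowup_eq_mul hjo.symm hlift hpo hlim
      exact ⟨_, _, w, hlift, hasNormalCrossings_blowup j o c, hw, hw0, he⟩
    · have hlift := lift_blowup hjo hp hl (hne.mono fun k hk => (mul_div_cancel₀ _ hk).symm)
      obtain ⟨hpo', hlim'⟩ := tendsto_mon_div_of_lift_blowup hjo hβ'o hlift hpo hlim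
      obtain ⟨π, q, w, hπ, hπnc, hw, hw0, he⟩ := ih hβ'o hlift.tendsto hpo' hlim'
        (ne_zero_of_tendsto_mon_div hlift.tendsto hpo' hlim')
        (by simpa [Finset.sum_add_distrib, add_comm 1] using hN)
      refine ⟨_, q, w, hlift.trans hπ, fun i =>
        (hasNormalCrossings_blowup o j 0 i).comp hπ.map_zero hπnc, hw, hw0, ?_⟩
      filter_upwards [he] with x hx
      simp only [Function.comp_apply, Pi.mul_apply] at hx ⊢
      rw [mon_single_add, mon_blowup hβ'o, blowup_of_ne hjo, blowup_self, hx]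
      ring

end Blowup

/-! ### Lowering the order in the last variable -/

section BinaryForm

open Polynomial

variable {d : ℕ} {e : ℝ}

/-- The binary form `∑ i < d, a i * z ^ i * s ^ (d - i) + e * z ^ d` of degree `d`. -/
def binaryForm (a : Fin d → ℝ) (e z s : ℝ) : ℝ :=
  ∑ i : Fin d, a i * z ^ (i : ℕ) * s ^ (d - i) + e * z ^ d

theorem binaryForm_mul_mul (a : Fin d → ℝ) (e r z s : ℝ) :
    binaryForm a e (r * z) (r * s) = r ^ d * binaryForm a e z s := by
  simp only [binaryForm, mul_add, Finset.mul_sum]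
  congr 1
  · refine Finset.sum_congr rfl fun i _ => ?_
    rw [← pow_sub_mul_pow r i.2.le]
    ring
  · ring

theorem binaryForm_pow_mul (a : Fin d → ℝ) (e z s : ℝ) :
    binaryForm (fun i => s ^ (d - i) * a i) e z 1 = binaryForm a e z s := by
  simp only [binaryForm, one_pow, mul_one]
  congr 1
  exact Finset.sum_congr rfl fun i _ => by ring

theorem binaryForm_one_zero (a : Fin d → ℝ) (e : ℝ) : binaryForm a e 1 0 = e := by
  simp only [binaryForm, one_pow, mul_one, add_eq_right]
  exact Finset.sum_eq_zero fun i _ => by rw [zero_pow (Nat.sub_pos_of_lt i.2).ne', mul_zero]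

theorem analyticAt_binaryForm {E : Type*} [NormedAddCommGroup E] [NormedSpace ℝ E] {x : E}
    {a : Fin d → E → ℝ} {e z s : E → ℝ} (ha : ∀ i, AnalyticAt ℝ (a i) x)
    (he : AnalyticAt ℝ e x) (hz : AnalyticAt ℝ z x) (hs : AnalyticAt ℝ s x) :
    AnalyticAt ℝ (fun y => binaryForm (fun i => a i y) (e y) (z y) (s y)) x :=
  (Finset.analyticAt_fun_sum _ fun i _ => ((ha i).mul (hz.pow i)).mul (hs.pow (d - i))).add
    (he.mul (hz.pow d))

theorem analyticOrderAt_eval_add {P : ℝ[X]} (hP : P ≠ 0) (c : ℝ) :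
    analyticOrderAt (fun t => P.eval (t + c)) 0 = P.rootMultiplicity c := by
  have han : ∀ R : ℝ[X], AnalyticAt ℝ (fun t => R.eval (t + c)) 0 := fun R => by
    simpa using! (analyticAt_id.add analyticAt_const).aeval_polynomial R
  obtain ⟨R, hR, hndvd⟩ := P.exists_eq_pow_rootMultiplicity_mul_and_not_dvd hP c
  refine (han P).analyticOrderAt_eq_natCast.2
    ⟨_, han R, by simpa [dvd_iff_isRoot] using hndvd, .of_forall fun t => ?_⟩
  conv_lhs => rw [hR]
  simp

theorem eq_C_mul_X_pow_of_le_rootMultiplicity {F : Type*} [Field F] [CharZero F] {P : F[X]} {c : F}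
    (hdeg : P.natDegree = d + 1) (hcoeff : P.coeff d = 0) (hc : d + 1 ≤ P.rootMultiplicity c) :
    P = C P.leadingCoeff * X ^ (d + 1) := by
  have hP : P ≠ 0 := by
    rintro rfl
    simp at hdeg
  have heq : P = C P.leadingCoeff * (X - C c) ^ (d + 1) :=
    eq_leadingCoeff_mul_of_monic_of_dvd_of_natDegree_le ((monic_X_sub_C c).pow _)
      ((le_rootMultiplicity_iff hP).1 hc) (by simp [hdeg])
  have hnext : P.leadingCoeff * ((d + 1) • -c) = P.coeff d := by
    conv_rhs => rw [← add_tsub_cancel_right d 1, ← hdeg,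
      ← nextCoeff_of_natDegree_pos (by omega), heq]
    rw [nextCoeff_C_mul, (monic_X_sub_C c).nextCoeff_pow, nextCoeff_X_sub_C]
  have hc0 : c = 0 := by simpa [hcoeff, hP, Nat.cast_add_one_ne_zero] using hnext
  simpa [hc0] using heq

theorem analyticOrderAt_binaryForm_lt {a : Fin (d + 1) → ℝ} (he : e ≠ 0)
    (hlast : a (Fin.last d) = 0) (ha : ∃ i, a i ≠ 0) (c : ℝ) :
    analyticOrderAt (fun t => binaryForm a e (t + c) 1) 0 < (d + 1 : ℕ) := by
  let P : ℝ[X] := ∑ i : Fin (d + 1), C (a i) * X ^ (i : ℕ) + C e * X ^ (d + 1)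
  have hlow : ∀ i : Fin (d + 1), P.coeff i = a i := fun i => by
    simp [P, finsetSum_coeff, coeff_X_pow, Fin.val_inj, i.2.ne]
  have htop : P.coeff (d + 1) = e := by
    simp [P, finsetSum_coeff, coeff_X_pow, fun i : Fin (d + 1) => i.2.ne']
  have hdeg : P.natDegree = d + 1 := by
    refine natDegree_eq_of_le_of_coeff_ne_zero
      (natDegree_add_le_of_degree_le (natDegree_sum_le_of_forall_le _ _ fun i _ => ?_)
        (natDegree_C_mul_X_pow_le _ _)) (by rwa [htop])
    exact (natDegree_C_mul_X_pow_le _ _).trans i.2.le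
  have hP : P ≠ 0 := by
    rintro hP
    exact he (by rw [← htop, hP, coeff_zero])
  have heval : (fun t => binaryForm a e (t + c) 1) = fun t => P.eval (t + c) := by
    ext t
    simp [binaryForm, P, eval_finsetSum]
  rw [heval, analyticOrderAt_eval_add hP]
  by_contra! hle
  have hpow := eq_C_mul_X_pow_of_le_rootMultiplicity hdeg (hlow (Fin.last d) ▸ hlast)
    (Nat.cast_le.1 hle)
  obtain ⟨i, hi⟩ := ha
  refine hi ?_
  rw [← hlow, hpow, coeff_C_mul_X_pow, if_neg i.2.ne]

end BinaryForm

section Step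

variable {K : Type*} {m : ℕ}

theorem analyticAt_comp_snd {E F : Type*} [NormedAddCommGroup E] [NormedSpace ℝ E]
    [NormedAddCommGroup F] [NormedSpace ℝ F] {g : E → ℝ} (hg : AnalyticAt ℝ g 0) :
    AnalyticAt ℝ (fun v : F × E => g v.2) 0 :=
  AnalyticAt.fun_comp (x := (0 : F × E)) hg analyticAt_snd

theorem hasNormalCrossings_comp_tail {g : (Fin m → ℝ) → ℝ} (hg : HasNormalCrossings g) :
    HasNormalCrossings fun y : Fin (m + 1) → ℝ => g (Fin.tail y) :=
  hg.comp rfl fun i => .of_coord i.succ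

theorem uniformizableAlong_pow_mul {l : Filter K}
    (hm : HasLocalUniformization l (Fin m → ℝ) m) {p : K → ℝ × (Fin m → ℝ)}
    (hp : Tendsto p l (𝓝 0)) {u : ℝ × (Fin m → ℝ) → ℝ} (hu : AnalyticAt ℝ u 0) (hu0 : u 0 ≠ 0)
    {b : (Fin m → ℝ) → ℝ} (hb : AnalyticAt ℝ b 0) (hb0 : ¬ b =ᶠ[𝓝 0] 0) (d : ℕ) :
    UniformizableAlong l (m + 1) p fun v => v.1 ^ d * u v * b v.2 := by
  obtain ⟨π, q, hπ, hnc⟩ := hm (fun k => (p k).2) b ((continuous_snd.tendsto 0).comp hp) hb hb0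
  have hlift := hπ.prodMap hp
  have hcons := Lift.of_continuousLinearEquiv (Fin.consEquivL ℝ fun _ => ℝ).symm hlift.tendsto
  refine ⟨_, _, hlift.trans hcons, ((HasNormalCrossings.of_coord 0).pow d |>.mul
    (.of_ne_zero (hcons.comp_analyticAt (hlift.comp_analyticAt hu)) ?_)).mul
    (hasNormalCrossings_comp_tail hnc)⟩
  exact (congrArg u (hlift.trans hcons).map_zero).trans_ne hu0

/-- Local uniformization on `ℝ × ℝ ^ m` of the germs of order `d` in the first variable. The factor
`b` collects the monomials split off while `d` decreases. -/
def HasUniformizationOfOrder (l : Filter K) (m d : ℕ) : Prop :=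
  ∀ (p : K → ℝ × (Fin m → ℝ)) (h : ℝ × (Fin m → ℝ) → ℝ) (b : (Fin m → ℝ) → ℝ),
    Tendsto p l (𝓝 0) → AnalyticAt ℝ h 0 → analyticOrderAt (fun z => h (z, 0)) 0 = d →
    AnalyticAt ℝ b 0 → ¬ b =ᶠ[𝓝 0] 0 → UniformizableAlong l (m + 1) p fun v => h v * b v.2

theorem lift_rescale {l : Filter K} {p : K → ℝ × (Fin m → ℝ)} (hp : Tendsto p l (𝓝 0))
    {β : Fin m → ℕ} (hβ : β ≠ 0) {c : ℝ} {t : K → ℝ} (ht : Tendsto t l (𝓝 c))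
    (hpt : ∀ᶠ k in l, (p k).1 = mon β (p k).2 * t k) :
    Lift l p (fun v => (mon β v.2 * (v.1 + c), v.2)) fun k => (t k - c, (p k).2) where
  analyticAt := ((analyticAt_comp_snd (analyticAt_mon β 0)).mul
    (analyticAt_fst.add analyticAt_const)).prod analyticAt_snd
  map_zero := by simp [mon_apply_zero hβ]
  tendsto := (by simpa using ht.sub_const c : Tendsto (fun k => t k - c) l (𝓝 0)).prodMk_nhds
    ((continuous_snd.tendsto 0).comp hp)
  eventually_eq := hpt.mono fun k hk => by simp [Prod.ext_iff, hk]

theorem uniformizableAlong_binaryForm_of_eq_mon_mul {l : Filter K} {d : ℕ}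
    (ih : ∀ n < d + 1, HasUniformizationOfOrder l m n) {p : K → ℝ × (Fin m → ℝ)}
    (hp : Tendsto p l (𝓝 0)) {β : Fin m → ℕ} (hβ : β ≠ 0) {c : ℝ} {t : K → ℝ}
    (ht : Tendsto t l (𝓝 c)) (hpt : ∀ᶠ k in l, (p k).1 = mon β (p k).2 * t k)
    {a : Fin (d + 1) → (Fin m → ℝ) → ℝ} (ha : ∀ i, AnalyticAt ℝ (a i) 0)
    (hlast : a (Fin.last d) 0 = 0) (hne : ∃ i, a i 0 ≠ 0) {u : ℝ × (Fin m → ℝ) → ℝ}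
    (hu : AnalyticAt ℝ u 0) (hu0 : u 0 ≠ 0) {b : (Fin m → ℝ) → ℝ} (hb : HasNormalCrossings b) :
    UniformizableAlong l (m + 1) p
      fun v => binaryForm (fun i => a i v.2) (u v) v.1 (mon β v.2) * b v.2 := by
  have hlift := lift_rescale hp hβ ht hpt
  refine .of_lift hlift ?_
  let h' : ℝ × (Fin m → ℝ) → ℝ := fun v =>
    binaryForm (fun i => a i v.2) (u (mon β v.2 * (v.1 + c), v.2)) (v.1 + c) 1
  have hh' : AnalyticAt ℝ h' 0 := analyticAt_binaryForm (fun i => analyticAt_comp_snd (ha i))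
    (hlift.comp_analyticAt hu) (analyticAt_fst.add analyticAt_const) analyticAt_const
  have hord : analyticOrderAt (fun z => h' (z, 0)) 0 < (d + 1 : ℕ) := by
    simpa [h', mon_apply_zero hβ] using!
      analyticOrderAt_binaryForm_lt (a := fun i => a i 0) hu0 hlast hne c
  obtain ⟨n, hn⟩ := ENat.ne_top_iff_exists.1 hord.ne_top
  have hbm : HasNormalCrossings (mon β ^ (d + 1) * b) :=
    ((HasNormalCrossings.of_mon β).pow _).mul hb
  refine (ih n (by rwa [← hn, Nat.cast_lt] at hord) _ h' (mon β ^ (d + 1) * b) hlift.tendsto hh'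
    hn.symm hbm.analyticAt hbm.not_eventuallyEq_zero).congr (.of_forall fun v => ?_)
  have hhom := binaryForm_mul_mul (fun i => a i v.2) (u (mon β v.2 * (v.1 + c), v.2)) (mon β v.2)
    (v.1 + c) 1
  rw [mul_one] at hhom
  simp only [Function.comp_apply, hhom, h', Pi.mul_apply, Pi.pow_apply]
  ring

theorem uniformizableAlong_binaryForm_of_tendsto {𝒰 : Ultrafilter K} {d : ℕ}
    {p : K → ℝ × (Fin m → ℝ)} (hp : Tendsto p 𝒰 (𝓝 0)) {β : Fin m → ℕ}
    (hp1 : ∀ᶠ k in (𝒰 : Filter K), (p k).1 ≠ 0)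
    (hlim : Tendsto (fun k => mon β (p k).2 / (p k).1) 𝒰 (𝓝 0))
    {a : Fin d → (Fin m → ℝ) → ℝ} (ha : ∀ i, AnalyticAt ℝ (a i) 0)
    {u : ℝ × (Fin m → ℝ) → ℝ} (hu : AnalyticAt ℝ u 0) (hu0 : u 0 ≠ 0)
    {b : (Fin m → ℝ) → ℝ} (hb : HasNormalCrossings b) :
    UniformizableAlong 𝒰 (m + 1) p
      fun v => binaryForm (fun i => a i v.2) (u v) v.1 (mon β v.2) * b v.2 := by
  have hcons := Lift.of_continuousLinearEquiv (Fin.consEquivL ℝ fun _ => ℝ).symm hp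
  have hmon : ∀ y : Fin (m + 1) → ℝ, mon (Fin.cons 0 β) y = mon β (Fin.tail y) := fun y => by
    simp [mon, Fin.prod_univ_succ, Fin.tail]
  obtain ⟨π, q, w, hπ, hπnc, hw, hw0, he⟩ := exists_lift_coord_dvd_mon (𝒰 := 𝒰) (o := 0)
    (β := Fin.cons 0 β) rfl hcons.tendsto hp1 (hlim.congr fun k => congrArg (· / _) (hmon _).symm)
  refine .of_lift hcons ⟨π, q, hπ, ?_⟩
  have hcoord : ∀ i, AnalyticAt ℝ (fun y => a i (Fin.tail (π y))) 0 := fun i =>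
    hπ.comp_analyticAt (hcons.comp_analyticAt (analyticAt_comp_snd (ha i)))
  have hunit : HasNormalCrossings fun y => binaryForm (fun i => a i (Fin.tail (π y)))
      (u (π y 0, Fin.tail (π y))) 1 (w y) := by
    refine .of_ne_zero (analyticAt_binaryForm hcoord
      (hπ.comp_analyticAt (hcons.comp_analyticAt hu)) analyticAt_const hw) ?_
    rw [hw0, binaryForm_one_zero, hπ.map_zero]
    exact hu0
  refine ((((hπnc 0).pow d).mul hunit).mul
    ((hasNormalCrossings_comp_tail hb).comp hπ.map_zero hπnc)).congr ?_
  filter_upwards [he] with y hy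
  have hhom := binaryForm_mul_mul (fun i => a i (Fin.tail (π y))) (u (π y 0, Fin.tail (π y)))
    (π y 0) 1 (w y)
  simp only [Function.comp_apply, hmon, Pi.mul_apply, mul_one] at hy hhom
  rw [← hy] at hhom
  exact congrArg (· * b (Fin.tail (π y))) hhom.symm

end Step

section Induction

variable {K : Type*} {𝒰 : Ultrafilter K} {m : ℕ}

/-- After preparation of the coefficients by a monomial, the roots are of the size of this monomial
or smaller than the first coordinate of the points. -/
theorem uniformizableAlong_binaryForm {d : ℕ}
    (hm : HasLocalUniformization (𝒰 : Filter K) (Fin m → ℝ) m)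
    (ih : ∀ n < d + 1, HasUniformizationOfOrder (𝒰 : Filter K) m n)
    {p : K → ℝ × (Fin m → ℝ)} (hp : Tendsto p 𝒰 (𝓝 0)) {a : Fin (d + 1) → (Fin m → ℝ) → ℝ}
    (ha : ∀ i, AnalyticAt ℝ (a i) 0) (ha0 : ∀ i, a i 0 = 0) (hlast : a (Fin.last d) =ᶠ[𝓝 0] 0)
    {u : ℝ × (Fin m → ℝ) → ℝ} (hu : AnalyticAt ℝ u 0) (hu0 : u 0 ≠ 0) {b : (Fin m → ℝ) → ℝ}
    (hb : AnalyticAt ℝ b 0) (hb0 : ¬ b =ᶠ[𝓝 0] 0) :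
    UniformizableAlong 𝒰 (m + 1) p
      fun v => binaryForm (fun i => a i v.2) (u v) v.1 1 * b v.2 := by
  have hsnd := (continuous_snd (X := ℝ) (Y := Fin m → ℝ)).tendsto 0
  by_cases hall : ∀ i, a i =ᶠ[𝓝 0] 0
  · refine (uniformizableAlong_pow_mul hm hp hu hu0 hb hb0 (d + 1)).congr ?_
    filter_upwards [hsnd.eventually (eventually_all.2 hall)] with v hv
    simp [binaryForm, hv, mul_comm (u v)]
  · obtain ⟨π, q, β, a', hπ, hbπ, hβ, ha', haa', hne⟩ := exists_weighted_preparation hm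
      (hsnd.comp hp) (c := fun i : Fin (d + 1) => d + 1 - i)
      (fun i => (Nat.sub_pos_of_lt i.2).ne') ha ha0 (not_forall.1 hall) hb hb0
    have hlift := hπ.prodMap hp
    have hu' := hlift.comp_analyticAt hu
    have hu0' : (u ∘ Prod.map id π) 0 ≠ 0 := (congrArg u hlift.map_zero).trans_ne hu0
    have hform : (fun v => binaryForm (fun i => a' i v.2) ((u ∘ Prod.map id π) v) v.1
        (mon β v.2) * (b ∘ π) v.2) =ᶠ[𝓝 0]
        (fun v => binaryForm (fun i => a i v.2) (u v) v.1 1 * b v.2) ∘ Prod.map id π := by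
      filter_upwards [hsnd.eventually (eventually_all.2 haa')] with v hv
      simp only [Function.comp_apply, Pi.mul_apply, Pi.pow_apply] at hv
      simp [← binaryForm_pow_mul, hv]
    refine .of_lift hlift (UniformizableAlong.congr ?_ hform)
    rcases exists_tendsto_eq_mul_or 𝒰 (fun k => (p k).1) fun k => mon β (q k) with
      ⟨c, t, ht, hpt⟩ | ⟨hp1, hlim⟩
    · refine uniformizableAlong_binaryForm_of_eq_mon_mul ih hlift.tendsto hβ ht hpt ha' ?_ hne
        hu' hu0' hbπ
      have hmul : mon β ^ (d + 1 - d) * a' (Fin.last d) =ᶠ[𝓝 0] 0 :=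
        (haa' (Fin.last d)).symm.trans (hπ.tendsto_nhds.eventually hlast)
      rw [Nat.add_sub_cancel_left, pow_one] at hmul
      exact ((eventuallyEq_zero_or_eventuallyEq_zero_of_mul (analyticAt_mon β 0) (ha' _)
        hmul).resolve_left (mon_not_eventuallyEq_zero β)).self_of_nhds
    · exact uniformizableAlong_binaryForm_of_tendsto hlift.tendsto hp1 hlim ha' hu' hu0' hbπ

theorem lift_translate {E : Type*} [NormedAddCommGroup E] [NormedSpace ℝ E] {l : Filter K}
    {p : K → ℝ × E} (hp : Tendsto p l (𝓝 0)) {ψ : E → ℝ} (hψ : AnalyticAt ℝ ψ 0) (hψ0 : ψ 0 = 0) :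
    Lift l p (fun v => (v.1 + ψ v.2, v.2)) fun k => ((p k).1 - ψ (p k).2, (p k).2) where
  analyticAt := (analyticAt_fst.add (analyticAt_comp_snd hψ)).prod analyticAt_snd
  map_zero := by simp [hψ0]
  tendsto := by
    have hp2 := (continuous_snd.tendsto 0).comp hp
    have hψt : Tendsto ψ (𝓝 0) (𝓝 0) := by simpa only [hψ0] using hψ.continuousAt.tendsto
    exact (by simpa using ((continuous_fst.tendsto 0).comp hp).sub (hψt.comp hp2) :
      Tendsto (fun k => (p k).1 - ψ (p k).2) l (𝓝 0)).prodMk_nhds hp2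
  eventually_eq := .of_forall fun k => by simp

theorem HasLocalUniformization.hasUniformizationOfOrder
    (hm : HasLocalUniformization (𝒰 : Filter K) (Fin m → ℝ) m) (d : ℕ) :
    HasUniformizationOfOrder (𝒰 : Filter K) m d := by
  induction d using Nat.strong_induction_on with
  | _ d ih =>
  intro p h b hp hh hord hb hb0
  cases d with
  | zero =>
    have han : AnalyticAt ℝ (fun z => h (z, 0)) 0 :=
      AnalyticAt.fun_comp (x := (0 : ℝ)) hh (analyticAt_id.prod analyticAt_const)
    simpa using uniformizableAlong_pow_mul hm hp hh (han.analyticOrderAt_eq_zero.1 hord) hb hb0 0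
  | succ d =>
    obtain ⟨ψ, a, u, hψ, hψ0, ha, ha0, had, hu, hu0, he⟩ := exists_tschirnhaus hh hord
    have hlift := lift_translate hp hψ hψ0
    refine .of_lift hlift ((uniformizableAlong_binaryForm (a := fun i => a i) hm ih hlift.tendsto
      (fun i => ha i) (fun i => ha0 i i.2) had hu hu0 hb hb0).congr ?_)
    filter_upwards [he] with v hv
    simp only [binaryForm, Function.comp_apply, hv, Finset.sum_range, one_pow, mul_one,
      mul_comm (v.1 ^ _)]

end Induction

section Dimension

variable {E : Type*} [NormedAddCommGroup E] [NormedSpace ℝ E]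

theorem exists_line_not_eventuallyEq_zero {h : E → ℝ} (hh : AnalyticAt ℝ h 0)
    (h0 : ¬ h =ᶠ[𝓝 0] 0) : ∃ v, ¬ (fun s : ℝ => h (s • v)) =ᶠ[𝓝 0] 0 := by
  obtain ⟨ρ, hρ, hball⟩ := Metric.eventually_nhds_iff_ball.1 hh.eventually_analyticAt
  obtain ⟨v, hv, hvρ⟩ :=
    ((not_eventually.1 h0).and_eventually (Metric.ball_mem_nhds (0 : E) hρ)).exists
  refine ⟨v, fun hz => hv ?_⟩
  have han : AnalyticOnNhd ℝ (fun s : ℝ => h (s • v)) (Icc 0 1) := fun s hs =>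
    AnalyticAt.fun_comp (g := h)
      (hball _ (((convex_ball 0 ρ).starConvex (Metric.mem_ball_self hρ)).smul_mem hvρ hs.1 hs.2))
      (analyticAt_id.smul analyticAt_const)
  simpa using han.eqOn_zero_of_preconnected_of_eventuallyEq_zero isPreconnected_Icc
    (left_mem_Icc.2 zero_le_one) hz (right_mem_Icc.2 zero_le_one)

variable {m : ℕ}

theorem exists_prodEquiv_apply_eq [FiniteDimensional ℝ E] (hE : Module.finrank ℝ E = m + 1)
    {v : E} (hv : v ≠ 0) :
    ∃ e : (ℝ × (Fin m → ℝ)) ≃L[ℝ] E, e (1, 0) = v := by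
  have e : (ℝ × (Fin m → ℝ)) ≃L[ℝ] E := .ofFinrankEq (by simp [hE, add_comm])
  obtain ⟨A, hA⟩ := SeparatingDual.exists_continuousLinearEquiv_apply_eq (R := ℝ)
    (x := e (1, 0)) (by simp) hv
  exact ⟨e.trans A, hA⟩

variable {K : Type*} {𝒰 : Ultrafilter K}

theorem hasLocalUniformization_succ
    (hm : HasLocalUniformization (𝒰 : Filter K) (Fin m → ℝ) m) :
    HasLocalUniformization (𝒰 : Filter K) (Fin (m + 1) → ℝ) (m + 1) := by
  intro p h hp hh hne
  by_cases h0 : h 0 = 0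
  · obtain ⟨v, hv⟩ := exists_line_not_eventuallyEq_zero hh hne
    have hv0 : v ≠ 0 := by
      rintro rfl
      exact hv (.of_forall fun s => by simpa only [smul_zero] using! h0)
    obtain ⟨e, he⟩ := exists_prodEquiv_apply_eq (m := m) (by simp) hv0
    have hlift := Lift.of_continuousLinearEquiv e hp
    have hline : ∀ s : ℝ, e (s, 0) = s • v := fun s => by
      rw [← he, ← map_smul, Prod.smul_mk, smul_eq_mul, mul_one, smul_zero]
    obtain ⟨d, hd⟩ := ENat.ne_top_iff_exists.1 fun htop :
        analyticOrderAt (fun s => (h ∘ e) (s, 0)) 0 = ⊤ =>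
      hv (by simpa only [Function.comp_apply, hline] using! analyticOrderAt_eq_top.1 htop)
    refine .of_lift hlift ?_
    simpa using! hm.hasUniformizationOfOrder d _ _ _ hlift.tendsto (hlift.comp_analyticAt hh)
      hd.symm (analyticAt_const (v := (1 : ℝ))) fun h1 => one_ne_zero h1.self_of_nhds
  · exact ⟨_, _, .refl hp, .of_ne_zero hh h0⟩

theorem hasLocalUniformization_pi (𝒰 : Ultrafilter K) (m : ℕ) :
    HasLocalUniformization (𝒰 : Filter K) (Fin m → ℝ) m := by
  induction m with
  | zero =>
    refine fun p h hp hh hne => ⟨_, _, .refl hp, .of_ne_zero hh fun h0 => hne ?_⟩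
    exact .of_forall fun x => by rwa [Subsingleton.elim x 0]
  | succ m ih => exact hasLocalUniformization_succ ih

theorem hasLocalUniformization [FiniteDimensional ℝ E] (𝒰 : Ultrafilter K) :
    HasLocalUniformization (𝒰 : Filter K) E (Module.finrank ℝ E) := by
  intro p h hp hh hne
  let e : (Fin (Module.finrank ℝ E) → ℝ) ≃L[ℝ] E := .ofFinrankEq (by simp)
  have hlift := Lift.of_continuousLinearEquiv e hp
  refine .of_lift hlift (hasLocalUniformization_pi 𝒰 _ _ _ hlift.tendsto
    (hlift.comp_analyticAt hh) fun h0 => hne ?_)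
  have hsymm : Tendsto e.symm (𝓝 0) (𝓝 0) := e.symm.continuous.tendsto' 0 0 (map_zero _)
  exact (hsymm.eventually h0).mono fun x hx => by simpa using hx

end Dimension

/-! ### Curve selection -/

section CurveSelection

open SignType

theorem exists_eventually_sign_eq {K : Type*} (𝒰 : Ultrafilter K) (r : K → ℝ) :
    ∃ σ : SignType, ∀ᶠ k in (𝒰 : Filter K), sign (r k) = σ := by
  obtain ⟨σ, hσ⟩ := (𝒰.map fun k => sign (r k)).eq_pure_of_finite
  exact ⟨σ, show {σ} ∈ 𝒰.map fun k => sign (r k) by simp [hσ]⟩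

theorem sign_mon {ι : Type*} [Fintype ι] (α : ι → ℕ) (x : ι → ℝ) :
    sign (mon α x) = ∏ i, sign (x i) ^ α i := by
  change signHom (mon α x) = ∏ i, signHom (x i) ^ α i
  simp only [mon, map_prod, map_pow]

theorem eventually_sign_eq {X : Type*} [TopologicalSpace X] {u : X → ℝ} {x : X}
    (hu : ContinuousAt u x) (h0 : u x ≠ 0) : ∀ᶠ y in 𝓝 x, sign (u y) = sign (u x) := by
  simpa [ContinuousAt, nhds_discrete] using (continuousAt_sign_of_ne_zero h0).comp hu

theorem sign_mul_coe {t : ℝ} (ht : 0 < t) (σ : SignType) : sign (t * (σ : ℝ)) = σ := by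
  rw [sign_mul, sign_pos ht, one_mul]
  cases σ <;> simp

/-- Up to a positive factor, a germ with normal crossings is a monomial times a constant near the
origin, so its sign depends only on the orthant. -/
theorem HasNormalCrossings.exists_eventually_sign_eq {ι : Type*} [Fintype ι] {h : (ι → ℝ) → ℝ}
    (hh : HasNormalCrossings h) :
    ∃ (α : ι → ℕ) (σ : SignType), ∀ᶠ x in 𝓝 0, sign (h x) = (∏ i, sign (x i) ^ α i) * σ := by
  obtain ⟨α, u, hu, hu0, he⟩ := hh
  refine ⟨α, sign (u 0), ?_⟩
  filter_upwards [he, eventually_sign_eq hu.continuousAt hu0] with x hx hux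
  rw [hx, Pi.mul_apply, sign_mul, sign_mon, hux]

variable {K E : Type*} [NormedAddCommGroup E] [NormedSpace ℝ E] [FiniteDimensional ℝ E]

/-- Once the nonzero germs in `s` are simultaneously uniformized, the arc
is the image of a half-line in the orthant containing the lifted points. -/
theorem exists_arc_sign_eq (𝒰 : Ultrafilter K) {p : K → E} (hp : Tendsto p 𝒰 (𝓝 0))
    {s : Set (E → ℝ)} (hs : s.Finite) (han : ∀ g ∈ s, AnalyticAt ℝ g 0) :
    ∃ γ : ℝ → E, AnalyticAt ℝ γ 0 ∧ γ 0 = 0 ∧ ∀ g ∈ s, ∀ᶠ k in (𝒰 : Filter K),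
      ∀ᶠ t in 𝓝[>] 0, sign (g (γ t)) = sign (g (p k)) := by
  obtain ⟨π, q, hπ, hnc⟩ := (hasLocalUniformization 𝒰).exists_lift_of_finite hp hs han
  choose σ hσ using fun j => Milnor.exists_eventually_sign_eq 𝒰 fun k => q k j
  let ray : ℝ → Fin (Module.finrank ℝ E) → ℝ := fun t j => t * (σ j : ℝ)
  have hray : AnalyticAt ℝ ray 0 := .pi fun j => analyticAt_id.mul analyticAt_const
  have hray0 : ray 0 = 0 := funext fun j => zero_mul _
  have hrayt : Tendsto ray (𝓝[>] 0) (𝓝 0) := by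
    simpa only [hray0] using hray.continuousAt.tendsto.mono_left nhdsWithin_le_nhds
  refine ⟨π ∘ ray, (hray0 ▸ hπ.analyticAt).comp hray, by simp [hray0, hπ.map_zero], fun g hg => ?_⟩
  rcases hnc g hg with hzero | hnc
  · filter_upwards [hp.eventually hzero] with k hk
    filter_upwards [(hπ.tendsto_nhds.comp hrayt).eventually hzero] with t ht
    exact congrArg sign (ht.trans hk.symm)
  · obtain ⟨α, τ, hτ⟩ := hnc.exists_eventually_sign_eq
    filter_upwards [hπ.eventually_eq, hπ.tendsto.eventually hτ, eventually_all.2 hσ]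
      with k hk hτk hσk
    filter_upwards [hrayt.eventually hτ, self_mem_nhdsWithin] with t hτt ht
    simp only [Function.comp_apply, ray, sign_mul_coe ht] at hτt hτk ⊢
    simp only [hτt, hk, hτk, hσk]

theorem exists_arc_sign_eq_of_frequently {P : E → Prop} (hP : ∃ᶠ z in 𝓝 0, P z)
    {s : Set (E → ℝ)} (hs : s.Finite) (han : ∀ g ∈ s, AnalyticAt ℝ g 0) :
    ∃ γ : ℝ → E, AnalyticAt ℝ γ 0 ∧ γ 0 = 0 ∧
      ∃ z, P z ∧ ∀ g ∈ s, ∀ᶠ t in 𝓝[>] 0, sign (g (γ t)) = sign (g z) := by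
  have := frequently_iff_neBot.1 hP
  have h𝒰 := Ultrafilter.of_le (𝓝 0 ⊓ 𝓟 {z | P z})
  obtain ⟨γ, hγ, hγ0, hsign⟩ := exists_arc_sign_eq (p := id) _ (h𝒰.trans inf_le_left) hs han
  have hP𝒰 : ∀ᶠ z in (Ultrafilter.of (𝓝 0 ⊓ 𝓟 {z | P z}) : Filter E), P z :=
    h𝒰.trans inf_le_right (mem_principal_self _)
  obtain ⟨z, hz, hzs⟩ := (hP𝒰.and ((eventually_all_finite hs).2 hsign)).exists
  exact ⟨γ, hγ, hγ0, z, hz, hzs⟩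

end CurveSelection

/-! ### Osgood's lemma -/

section Osgood
open MeasureTheory Complex

section ContinuousMap
variable {X : Type*} [TopologicalSpace X]

theorem inverse_continuousMap_apply {g : C(X, ℂ)} (hg : ∀ x, g x ≠ 0) (x : X) :
    Ring.inverse g x = (g x)⁻¹ := by
  rw [← mul_eq_one_iff_eq_inv₀ (hg x), ← ContinuousMap.mul_apply,
    Ring.inverse_mul_cancel g (ContinuousMap.isUnit_iff_forall_ne_zero g |>.2 hg),
    ContinuousMap.one_apply]

theorem analyticAt_integral_continuousMap [CompactSpace X] [MeasurableSpace X]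
    [OpensMeasurableSpace X] (μ : Measure X) [IsFiniteMeasure μ] {E : Type*}
    [NormedAddCommGroup E] [NormedSpace ℂ E] {G : E → C(X, ℂ)} {v : E} (hG : AnalyticAt ℂ G v) :
    AnalyticAt ℂ (fun w => ∫ x, G w x ∂μ) v := by
  have hint (g : C(X, ℂ)) : Integrable g μ :=
    g.continuous.integrable_of_hasCompactSupport (HasCompactSupport.of_compactSpace _)
  let L : C(X, ℂ) →L[ℂ] ℂ := LinearMap.mkContinuous
    { toFun := fun g => ∫ x, g x ∂μ
      map_add' := fun g h => integral_add (hint g) (hint h)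
      map_smul' := fun c g => integral_const_mul c _ } (μ.real univ) fun g => by
        rw [mul_comm]
        exact norm_integral_le_of_norm_le_const (Eventually.of_forall g.norm_coe_le_norm)
  exact (L.analyticAt (G v)).comp hG

end ContinuousMap

variable {n : ℕ} {r R : ℝ} {z : Fin n → ℂ} {f : (Fin n → ℂ) → ℂ}

theorem norm_torusMap_apply (hr : 0 ≤ r) (θ : Fin n → ℝ) (i : Fin n) :
    ‖torusMap 0 (fun _ => r) θ i‖ = r := by
  simp [torusMap, norm_exp_ofReal_mul_I, abs_of_nonneg hr]

theorem continuous_torusMap (c : Fin n → ℂ) (ρ : Fin n → ℝ) : Continuous (torusMap c ρ) := by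
  unfold torusMap
  fun_prop

theorem continuous_torusMap_apply (c : Fin n → ℂ) (ρ : Fin n → ℝ) (i : Fin n) :
    Continuous fun θ => torusMap c ρ θ i :=
  (continuous_apply i).comp (continuous_torusMap c ρ)

theorem torusMap_mem_ball (hr : 0 ≤ r) (hrR : r < R) (θ : Fin n → ℝ) :
    torusMap 0 (fun _ => r) θ ∈ Metric.ball (0 : Fin n → ℂ) R := by
  rw [mem_ball_zero_iff, pi_norm_lt_iff (hr.trans_lt hrR)]
  exact fun i => (norm_torusMap_apply hr θ i).trans_lt hrR

theorem torusMap_apply_sub_ne_zero (hr : 0 ≤ r) {c : ℂ} (hc : ‖c‖ < r) (θ : Fin n → ℝ)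
    (i : Fin n) : torusMap 0 (fun _ => r) θ i - c ≠ 0 :=
  sub_ne_zero.2 fun h => hc.ne (h ▸ norm_torusMap_apply hr θ i)

theorem continuous_comp_torusMap (hr : 0 ≤ r) (hrR : r < R)
    (hf : ContinuousOn f (Metric.ball 0 R)) : Continuous (f ∘ torusMap 0 fun _ => r) :=
  hf.comp_continuous (continuous_torusMap _ _) (torusMap_mem_ball hr hrR)

/-- The Cauchy kernel is an analytic function of `z` with values in the Banach algebra of continuous
functions on the parameter cube of the torus. -/
theorem analyticAt_torusIntegral_cauchyKernel (hr : 0 < r)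
    (hf : Continuous (f ∘ torusMap 0 fun _ => r)) :
    AnalyticAt ℂ (fun z : Fin n → ℂ => ∯ ζ in T(0, fun _ => r), (∏ i, (ζ i - z i)⁻¹) * f ζ) 0 := by
  let Q : Set (Fin n → ℝ) := Icc 0 fun _ => 2 * Real.pi
  let coord (i : Fin n) : C(Q, ℂ) := .restrict Q ⟨fun θ => torusMap 0 (fun _ => r) θ i,
    continuous_torusMap_apply _ _ i⟩
  let weight : C(Q, ℂ) :=
    .restrict Q ⟨fun θ => (∏ i, r * exp (θ i * I) * I) * f (torusMap 0 (fun _ => r) θ),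
      .mul (by fun_prop) hf⟩
  have hne {c : ℂ} (hc : ‖c‖ < r) (i : Fin n) (θ : Q) : (coord i - c • (1 : C(Q, ℂ))) θ ≠ 0 := by
    simpa [coord] using torusMap_apply_sub_ne_zero hr.le hc θ.1 i
  have hkernel : AnalyticAt ℂ
      (fun z : Fin n → ℂ => weight * ∏ i, Ring.inverse (coord i - z i • (1 : C(Q, ℂ)))) 0 := by
    refine analyticAt_const.mul (Finset.analyticAt_fun_prod _ fun i _ => ?_)
    obtain ⟨u, hu⟩ := (ContinuousMap.isUnit_iff_forall_ne_zero _).2 (hne (c := 0) (by simpa) i)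
    refine AnalyticAt.fun_comp (g := Ring.inverse) (f := fun z : Fin n → ℂ => coord i - z i • _)
      ?_ (analyticAt_const.sub (.fun_smul ?_ analyticAt_const))
    · simpa only [hu] using! analyticAt_inverse (𝕜 := ℂ) u
    · exact (ContinuousLinearMap.proj (R := ℂ) (φ := fun _ : Fin n => ℂ) i).analyticAt _
  have hfin : IsFiniteMeasure (volume.comap (Subtype.val : Q → Fin n → ℝ)) :=
    ⟨by simpa [(MeasurableEmbedding.subtype_coe measurableSet_Icc).comap_apply, Q] using!
      isCompact_Icc.measure_lt_top⟩
  refine (analyticAt_integral_continuousMap (volume.comap Subtype.val) hkernel).congr ?_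
  filter_upwards [Metric.ball_mem_nhds (0 : Fin n → ℂ) hr] with z hz
  rw [mem_ball_zero_iff, pi_norm_lt_iff hr] at hz
  rw [torusIntegral, ← integral_subtype_comap measurableSet_Icc]
  refine integral_congr_ae (Eventually.of_forall fun θ => ?_)
  simp [inverse_continuousMap_apply (hne (hz _) _), weight, coord, smul_eq_mul]
  ring

theorem cons_mem_ball_zero {x : ℂ} (hx : ‖x‖ < R) {y : Fin n → ℂ} (hy : ∀ i, ‖y i‖ < R) :
    (Fin.cons x y : Fin (n + 1) → ℂ) ∈ Metric.ball 0 R := by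
  rw [mem_ball_zero_iff, pi_norm_lt_iff ((norm_nonneg x).trans_lt hx)]
  exact Fin.cases hx hy

theorem circleIntegral_sub_inv_smul_cons {f : (Fin (n + 1) → ℂ) → ℂ} (hrR : r < R)
    (hf : DifferentiableOn ℂ f (Metric.ball 0 R)) {z : Fin (n + 1) → ℂ} (hz : ∀ i, ‖z i‖ < r) :
    (∮ x in C(0, r), (x - z 0)⁻¹ • f (Fin.cons x (Fin.tail z))) = (2 * Real.pi * I) * f z := by
  have hslice : DifferentiableOn ℂ (fun x : ℂ => f (Fin.cons x (Fin.tail z)))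
      (Metric.ball 0 R) := by
    refine hf.comp (fun x _ => ?_) fun x hx =>
      cons_mem_ball_zero (by simpa using hx) fun i => (hz i.succ).trans hrR
    exact (differentiableAt_pi.2 (Fin.cases (by simp) (by simp))).differentiableWithinAt
  simpa only [Fin.cons_self_tail, smul_eq_mul] using
    (hslice.mono (Metric.closedBall_subset_ball hrR)).circleIntegral_sub_inv_smul
      (w := z 0) (by simpa using hz 0)

theorem torusIntegral_cauchyKernel (hr : 0 < r) (hrR : r < R) {n : ℕ} {f : (Fin n → ℂ) → ℂ}
    (hf : DifferentiableOn ℂ f (Metric.ball 0 R)) {z : Fin n → ℂ} (hz : ∀ i, ‖z i‖ < r) :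
    (∯ ζ in T(0, fun _ => r), (∏ i, (ζ i - z i)⁻¹) * f ζ) = (2 * Real.pi * I) ^ n * f z := by
  induction n with
  | zero => simp [torusIntegral_dim0, Subsingleton.elim z 0]
  | succ n ih =>
    have hint : TorusIntegrable (fun ζ => (∏ i, (ζ i - z i)⁻¹) * f ζ) 0 fun _ => r := by
      refine Continuous.integrableOn_Icc (.mul (continuous_finsetProd _ fun i _ => .inv₀ ?_
        (torusMap_apply_sub_ne_zero hr.le (hz i) · i)) ?_)
      · exact (continuous_torusMap_apply _ _ i).sub continuous_const
      · exact continuous_comp_torusMap hr.le hrR hf.continuousOn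
    have hinner (x : ℂ) (hx : x ∈ Metric.sphere 0 r) :
        (∯ y in T(0, fun _ : Fin n => r),
          (∏ i, ((Fin.cons x y : Fin (n + 1) → ℂ) i - z i)⁻¹) * f (Fin.cons x y)) =
        (2 * Real.pi * I) ^ n • ((x - z 0)⁻¹ • f (Fin.cons x (Fin.tail z))) := by
      have hslice : DifferentiableOn ℂ (fun y : Fin n → ℂ => f (Fin.cons x y))
          (Metric.ball 0 R) := by
        refine hf.comp (fun y _ => ?_) fun y hy => cons_mem_ball_zero
          ((mem_sphere_zero_iff_norm.1 hx).trans_lt hrR)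
          ((pi_norm_lt_iff (hr.trans hrR)).1 (mem_ball_zero_iff.1 hy))
        refine (differentiableAt_pi.2 (Fin.cases (by simp) fun i => ?_)).differentiableWithinAt
        exact differentiableAt_apply i y
      rw [smul_comm, smul_eq_mul _ (f _),
        ← ih hslice (z := Fin.tail z) fun i => hz i.succ, smul_eq_mul, ← torusIntegral_const_mul]
      simp only [Fin.prod_univ_succ, Fin.cons_zero, Fin.cons_succ, Fin.tail, mul_assoc]
    rw [torusIntegral_succ hint]
    refine (circleIntegral.integral_congr hr.le hinner).trans ?_
    rw [circleIntegral.integral_smul, circleIntegral_sub_inv_smul_cons hrR hf hz, smul_eq_mul,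
      pow_succ, mul_assoc (_ ^ n)]

theorem analyticAt_of_differentiableOn {E : Type*} [NormedAddCommGroup E] [NormedSpace ℂ E]
    [FiniteDimensional ℂ E] {U : Set E} (hU : IsOpen U) {x : E} (hx : x ∈ U) {f : E → ℂ}
    (hf : DifferentiableOn ℂ f U) : AnalyticAt ℂ f x := by
  let e : E ≃L[ℂ] (Fin (Module.finrank ℂ E) → ℂ) := .ofFinrankEq (by simp)
  obtain ⟨R, hR, hball⟩ := Metric.mem_nhds_iff.1 <|
    ContinuousAt.preimage_mem_nhds (f := fun y => x + e.symm y) (x := 0) (by fun_prop)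
      (hU.mem_nhds (by simpa using hx))
  obtain ⟨r, hr, hrR⟩ := exists_between hR
  have hfe : DifferentiableOn ℂ (fun y => f (x + e.symm y)) (Metric.ball 0 R) :=
    hf.comp (by fun_prop) hball
  have hana : AnalyticAt ℂ (fun y => f (x + e.symm y)) 0 := by
    refine (AnalyticAt.mul (analyticAt_const (v := ((2 * Real.pi * I) ^ Module.finrank ℂ E)⁻¹))
      (analyticAt_torusIntegral_cauchyKernel hr
        (continuous_comp_torusMap hr.le hrR hfe.continuousOn))).congr ?_
    filter_upwards [Metric.ball_mem_nhds _ hr] with z hz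
    rw [mem_ball_zero_iff, pi_norm_lt_iff hr] at hz
    rw [Pi.mul_apply, torusIntegral_cauchyKernel hr hrR hfe hz,
      inv_mul_cancel_left₀ (by simp [Real.pi_ne_zero])]
  have := AnalyticAt.fun_comp (g := fun y => f (x + e.symm y)) (f := fun w => e (w - x)) (x := x)
    (by simpa using hana) ((e.analyticAt _).fun_comp (analyticAt_id.sub analyticAt_const))
  simpa using this

end Osgood

/-! ### Milnor's lemma on the gradient -/

section Gradient
open scoped ContDiff ComplexConjugate InnerProductSpace Gradient

variable {E : Type*} [NormedAddCommGroup E] [InnerProductSpace ℂ E]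

theorem inner_self_eq_ofReal_norm_sq (x : E) : ⟪x, x⟫_ℂ = (‖x‖ : ℂ) ^ 2 :=
  inner_self_eq_norm_sq_to_K x

/-- The logarithmic radial derivative `Df(z) z / f(z)` multiplied by `‖f z‖ ^ 2`, which makes it
smooth along the zeros of `f` without changing its argument. -/
noncomputable def radialDeriv (f : E → ℂ) (z : E) : ℂ := conj (f z) * fderiv ℂ f z z

theorem contDiffAt_radialDeriv {f : E → ℂ} {z : E} (hf : AnalyticAt ℂ f z) :
    ContDiffAt ℝ ω (radialDeriv f) z :=
  (Complex.conjCLE.contDiff.contDiffAt.comp z hf.restrictScalars.contDiffAt).mul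
    ((hf.fderiv.contDiffAt.clm_apply contDiffAt_id).restrict_scalars ℝ)

theorem contDiffAt_re_radialDeriv {f : E → ℂ} {z : E} (hf : AnalyticAt ℂ f z) :
    ContDiffAt ℝ ω (fun w => (radialDeriv f w).re) z :=
  Complex.reCLM.contDiff.contDiffAt.comp z (contDiffAt_radialDeriv hf)

theorem contDiffAt_im_radialDeriv {f : E → ℂ} {z : E} (hf : AnalyticAt ℂ f z) :
    ContDiffAt ℝ ω (fun w => (radialDeriv f w).im) z :=
  Complex.imCLM.contDiff.contDiffAt.comp z (contDiffAt_radialDeriv hf)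

variable [CompleteSpace E]

/-- The Gram determinant `‖z‖² ‖∇f‖² - |⟪∇f, z⟫|²` of `z` and `∇f`. -/
noncomputable def gradientGram (f : E → ℂ) (z : E) : ℝ :=
  ‖z‖ ^ 2 * ‖∇ f z‖ ^ 2 - ‖fderiv ℂ f z z‖ ^ 2

/-- The component of `∇f` orthogonal to `z`, multiplied by `‖z‖ ^ 2`. -/
noncomputable def tangentialGradient (f : E → ℂ) (z : E) : E :=
  ((‖z‖ ^ 2 : ℝ) : ℂ) • ∇ f z - ⟪z, ∇ f z⟫_ℂ • z

theorem inner_tangentialGradient (f : E → ℂ) (z : E) : ⟪z, tangentialGradient f z⟫_ℂ = 0 := by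
  simp only [tangentialGradient, inner_sub_right, inner_smul_right, inner_self_eq_ofReal_norm_sq,
    Complex.ofReal_pow]
  ring

theorem fderiv_tangentialGradient (f : E → ℂ) (z : E) :
    fderiv ℂ f z (tangentialGradient f z) = gradientGram f z := by
  rw [tangentialGradient, map_sub, map_smul, map_smul, smul_eq_mul, smul_eq_mul,
    ← inner_gradient_left (y := ∇ f z), inner_self_eq_ofReal_norm_sq, inner_gradient_right,
    Complex.conj_mul', gradientGram]
  push_cast
  ring

theorem norm_tangentialGradient_sq (f : E → ℂ) (z : E) :
    ‖tangentialGradient f z‖ ^ 2 = ‖z‖ ^ 2 * gradientGram f z := by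
  have h : ⟪tangentialGradient f z, tangentialGradient f z⟫_ℂ =
      ((‖z‖ ^ 2 * gradientGram f z : ℝ) : ℂ) := by
    nth_rw 1 [tangentialGradient]
    rw [inner_sub_left, inner_smul_left, inner_smul_left, inner_tangentialGradient,
      inner_gradient_left, fderiv_tangentialGradient, Complex.conj_ofReal, mul_zero, sub_zero,
      Complex.ofReal_mul]
  rw [inner_self_eq_ofReal_norm_sq] at h
  exact_mod_cast h

theorem gradientGram_nonneg (f : E → ℂ) (z : E) : 0 ≤ gradientGram f z := by
  rw [gradientGram, sub_nonneg, ← mul_pow, ← inner_gradient_left, mul_comm]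
  gcongr
  exact norm_inner_le_norm _ _

theorem norm_sq_mul_fderiv_of_gradientGram_nonpos {f : E → ℂ} {z : E}
    (h : gradientGram f z ≤ 0) (v : E) :
    (‖z‖ : ℂ) ^ 2 * fderiv ℂ f z v = fderiv ℂ f z z * ⟪z, v⟫_ℂ := by
  have htan : tangentialGradient f z = 0 := by
    rw [← norm_eq_zero, ← sq_eq_zero_iff, norm_tangentialGradient_sq,
      h.antisymm (gradientGram_nonneg f z), mul_zero]
  have hinner := congrArg (⟪·, v⟫_ℂ) htan
  simp only [tangentialGradient, inner_sub_left, inner_smul_left, inner_gradient_left,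
    Complex.conj_ofReal, inner_conj_symm, inner_zero_left, sub_eq_zero] at hinner
  exact_mod_cast hinner

theorem contDiffAt_gradient {f : E → ℂ} {z : E} (hf : AnalyticAt ℂ f z) :
    ContDiffAt ℝ ω (∇ f) z :=
  ((InnerProductSpace.toDual ℂ E).symm.toLinearEquiv.toLinearMap.toAddMonoidHom.toRealLinearMap
    (InnerProductSpace.toDual ℂ E).symm.continuous).contDiff.contDiffAt.comp z
    (hf.fderiv.restrictScalars (𝕜 := ℝ)).contDiffAt

theorem contDiffAt_gradientGram {f : E → ℂ} {z : E} (hf : AnalyticAt ℂ f z) :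
    ContDiffAt ℝ ω (gradientGram f) z :=
  ((contDiffAt_id.norm_sq ℂ).mul ((contDiffAt_gradient hf).norm_sq ℂ)).sub
    (((hf.fderiv.contDiffAt.clm_apply contDiffAt_id).restrict_scalars ℝ).norm_sq ℂ)

end Gradient

section MilnorLemma
open scoped ComplexConjugate InnerProductSpace

variable {E : Type*} [NormedAddCommGroup E] [InnerProductSpace ℂ E]

/-- If `γ t ~ t ^ n • a`, the limit is `n`. -/
theorem exists_tendsto_mul_inner_deriv_div [CompleteSpace E] {γ : ℝ → E} (hγ : AnalyticAt ℝ γ 0)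
    (h0 : γ 0 = 0) (hne : ∀ᶠ t in 𝓝[>] 0, γ t ≠ 0) :
    ∃ c : ℝ, 0 < c ∧
      Tendsto (fun t : ℝ => t * ⟪γ t, deriv γ t⟫_ℂ / (‖γ t‖ : ℂ) ^ 2) (𝓝[>] 0) (𝓝 c) := by
  obtain ⟨n, a, ha, ha0, hγa⟩ := hγ.exists_eventuallyEq_pow_smul_nonzero_iff.2 fun hzero =>
    ((hzero.filter_mono nhdsWithin_le_nhds).and hne).exists.elim fun t ht => ht.2 ht.1
  simp only [sub_zero] at hγa
  have hn : n ≠ 0 := by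
    rintro rfl
    exact ha0 (by simpa [h0] using hγa.self_of_nhds.symm)
  have hderiv : ∀ᶠ t in 𝓝[>] 0, t • deriv γ t = t ^ n • ((n : ℝ) • a t + t • deriv a t) := by
    filter_upwards [hγa.eventually_nhds.filter_mono nhdsWithin_le_nhds,
      ha.eventually_analyticAt.filter_mono nhdsWithin_le_nhds] with t ht hat
    rw [EventuallyEq.deriv_eq ht,
      ((hasDerivAt_pow n t).fun_smul hat.differentiableAt.hasDerivAt).deriv, add_comm, smul_add,
      smul_add, smul_smul, smul_smul, smul_smul, smul_smul, mul_left_comm, ← pow_succ',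
      Nat.sub_one_add_one hn, mul_comm t, mul_comm (n : ℝ)]
  have hlim : Tendsto (fun t : ℝ => ⟪a t, (n : ℝ) • a t + t • deriv a t⟫_ℂ / (‖a t‖ : ℂ) ^ 2)
      (𝓝 0) (𝓝 (n : ℝ)) := by
    have hcont : ContinuousAt (fun t : ℝ =>
        ⟪a t, (n : ℝ) • a t + t • deriv a t⟫_ℂ / (‖a t‖ : ℂ) ^ 2) 0 := by
      have := ha.continuousAt
      have := ha.deriv.continuousAt
      refine .div (by fun_prop) (by fun_prop) (by simpa using ha0)
    convert hcont.tendsto using 2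
    simp [ha0]
  refine ⟨n, by positivity, (hlim.mono_left nhdsWithin_le_nhds).congr' ?_⟩
  filter_upwards [hγa.filter_mono nhdsWithin_le_nhds, hderiv, self_mem_nhdsWithin] with t ht hdt ht0
  have hpow : (t : ℂ) ^ n ≠ 0 := pow_ne_zero n (Complex.ofReal_ne_zero.2 (mem_Ioi.1 ht0).ne')
  have hnorm : (‖γ t‖ : ℂ) ^ 2 = (t : ℂ) ^ n * ((t : ℂ) ^ n * (‖a t‖ : ℂ) ^ 2) := by
    rw [ht, norm_smul, norm_pow, Real.norm_of_nonneg (mem_Ioi.1 ht0).le]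
    push_cast
    ring
  rw [hnorm, ← inner_smul_right, Complex.coe_smul, hdt, ht, ← Complex.coe_smul (t ^ n) (a t),
    ← Complex.coe_smul (t ^ n) (_ + _), inner_smul_left, inner_smul_right, Complex.conj_ofReal,
    Complex.ofReal_pow, mul_div_mul_left _ _ hpow, mul_div_mul_left _ _ hpow]

theorem norm_sq_mul_inner_deriv_comp [CompleteSpace E] {f : E → ℂ} {γ : ℝ → E} {t : ℝ}
    (hf : DifferentiableAt ℂ f (γ t)) (hγ : DifferentiableAt ℝ γ t)
    (hgram : gradientGram f (γ t) ≤ 0) :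
    (‖γ t‖ : ℂ) ^ 2 * ⟪f (γ t), deriv (f ∘ γ) t⟫_ℂ =
      radialDeriv f (γ t) * ⟪γ t, deriv γ t⟫_ℂ := by
  have hchain := ((hf.hasFDerivAt.restrictScalars ℝ).comp_hasDerivAt t hγ.hasDerivAt).deriv
  rw [hchain, RCLike.inner_apply', radialDeriv, mul_left_comm, mul_assoc]
  exact congrArg _ (norm_sq_mul_fderiv_of_gradientGram_nonpos hgram _)

/-- Differentiating `f ∘ γ` where `∇f` is a multiple of `γ t` shows that the logarithmic radial
derivative of `f` is the ratio of the logarithmic derivatives of `f ∘ γ` and `γ`. -/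
theorem exists_tendsto_radialDeriv_div [CompleteSpace E] {f : E → ℂ} (hf : AnalyticAt ℂ f 0)
    (hf0 : f 0 = 0) {γ : ℝ → E} (hγ : AnalyticAt ℝ γ 0) (hγ0 : γ 0 = 0)
    (hne : ∀ᶠ t in 𝓝[>] 0, f (γ t) ≠ 0) (hgram : ∀ᶠ t in 𝓝[>] 0, gradientGram f (γ t) ≤ 0) :
    ∃ c : ℝ, 0 < c ∧
      Tendsto (fun t => radialDeriv f (γ t) / (‖f (γ t)‖ : ℂ) ^ 2) (𝓝[>] 0) (𝓝 c) := by
  have hfγ : AnalyticAt ℝ (f ∘ γ) 0 := (hγ0 ▸ hf.restrictScalars).comp hγ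
  have hγne : ∀ᶠ t in 𝓝[>] 0, γ t ≠ 0 := hne.mono fun t ht h => ht (h ▸ hf0)
  obtain ⟨b, hb, hfγlim⟩ := exists_tendsto_mul_inner_deriv_div hfγ (by simp [hγ0, hf0]) hne
  obtain ⟨c, hc, hγlim⟩ := exists_tendsto_mul_inner_deriv_div hγ hγ0 hγne
  refine ⟨b / c, div_pos hb hc, ?_⟩
  rw [Complex.ofReal_div]
  have hc' : (c : ℂ) ≠ 0 := Complex.ofReal_ne_zero.2 hc.ne'
  refine (hfγlim.div hγlim hc').congr' ?_
  have hfan : ∀ᶠ t in 𝓝 0, AnalyticAt ℂ f (γ t) :=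
    (hγ0 ▸ hγ.continuousAt.tendsto).eventually hf.eventually_analyticAt
  filter_upwards [hne, hgram, hγlim.eventually_ne hc', hfan.filter_mono nhdsWithin_le_nhds,
    hγ.eventually_analyticAt.filter_mono nhdsWithin_le_nhds] with t ht hgt hqt hft hat
  have hmain := norm_sq_mul_inner_deriv_comp hft.differentiableAt hat.differentiableAt hgt
  have hft' : (‖f (γ t)‖ : ℂ) ≠ 0 := by simpa using ht
  simp only [ne_eq, div_eq_zero_iff, mul_eq_zero, not_or] at hqt
  obtain ⟨⟨ht0, hinner⟩, -⟩ := hqt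
  simp only [Pi.div_apply, Function.comp_apply] at hmain ⊢
  rw [div_div_div_eq]
  field_simp
  linear_combination hmain

theorem exists_arc_of_frequently [FiniteDimensional ℂ E] {f : E → ℂ} (hf : AnalyticAt ℂ f 0)
    (hbad : ∃ᶠ z in 𝓝 0, f z ≠ 0 ∧ gradientGram f z ≤ 0 ∧
      (radialDeriv f z).re ≤ |(radialDeriv f z).im|) :
    ∃ γ : ℝ → E, AnalyticAt ℝ γ 0 ∧ γ 0 = 0 ∧ ∀ᶠ t in 𝓝[>] 0, f (γ t) ≠ 0 ∧
      gradientGram f (γ t) ≤ 0 ∧ (radialDeriv f (γ t)).re ≤ |(radialDeriv f (γ t)).im| := by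
  have : FiniteDimensional ℝ E := .complexToReal E
  let s : Set (E → ℝ) := {fun z => ‖f z‖ ^ 2, gradientGram f,
    fun z => (radialDeriv f z).re - (radialDeriv f z).im,
    fun z => (radialDeriv f z).re + (radialDeriv f z).im}
  have han : ∀ g ∈ s, AnalyticAt ℝ g 0 := by
    have hre := contDiffAt_re_radialDeriv hf
    have him := contDiffAt_im_radialDeriv hf
    rintro g (rfl | rfl | rfl | rfl)
    exacts [(hf.restrictScalars.contDiffAt.norm_sq ℂ).analyticAt,
      (contDiffAt_gradientGram hf).analyticAt, (hre.sub him).analyticAt, (hre.add him).analyticAt]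
  obtain ⟨γ, hγ, hγ0, z, ⟨hne, hgram, hle⟩, hsign⟩ :=
    exists_arc_sign_eq_of_frequently hbad (s := s) (by simp [s]) han
  refine ⟨γ, hγ, hγ0, ?_⟩
  have hnonpos {a b : ℝ} (h : SignType.sign a = SignType.sign b) : a ≤ 0 ↔ b ≤ 0 := by
    rw [← sign_nonpos_iff, h, sign_nonpos_iff]
  simp only [s, mem_insert_iff, mem_singleton_iff, forall_eq_or_imp, forall_eq] at hsign
  filter_upwards [hsign.1, hsign.2.1, hsign.2.2.1, hsign.2.2.2] with t htnorm htgram htsub htadd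
  refine ⟨?_, ?_, ?_⟩
  · rw [← norm_ne_zero_iff, ← sq_pos_iff, ← sign_eq_one_iff] at hne ⊢
    rwa [htnorm]
  · exact (hnonpos htgram).2 hgram
  · rw [le_abs, ← sub_nonpos, ← sub_nonpos (b := -_), sub_neg_eq_add] at hle ⊢
    rwa [hnonpos htsub, hnonpos htadd]

/-- **Milnor's lemma.** Where `∇f` is a complex multiple of `z`, the logarithmic radial derivative
of `f` has argument in `(-π/4, π/4)`. -/
theorem milnor_lemma [FiniteDimensional ℂ E] {f : E → ℂ} (hf : AnalyticAt ℂ f 0) (hf0 : f 0 = 0) :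
    ∀ᶠ z in 𝓝 0, f z ≠ 0 →
      0 < gradientGram f z ∨ |(radialDeriv f z).im| < (radialDeriv f z).re := by
  by_contra hcon
  obtain ⟨γ, hγ, hγ0, hbad⟩ := exists_arc_of_frequently hf
    (by simpa only [not_eventually, Classical.not_imp, not_or, not_lt] using hcon)
  obtain ⟨c, hc, hlim⟩ := exists_tendsto_radialDeriv_div hf hf0 hγ hγ0 (hbad.mono fun _ ht => ht.1)
    (hbad.mono fun _ ht => ht.2.1)
  have hopen : ∀ᶠ w : ℂ in 𝓝 (c : ℂ), |w.im| < w.re :=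
    (Complex.continuous_im.abs.continuousAt).eventually_lt Complex.continuous_re.continuousAt
      (by simpa using hc)
  obtain ⟨t, ⟨hne, -, hle⟩, hlt⟩ := (hbad.and (hlim.eventually hopen)).exists
  rw [← Complex.ofReal_pow, Complex.div_ofReal_im, Complex.div_ofReal_re, abs_div, abs_sq,
    div_lt_div_iff_of_pos_right (by positivity)] at hlt
  exact hle.not_gt hlt

end MilnorLemma

/-! ### Flows of bounded Lipschitz vector fields -/

section Flow
open scoped NNReal

variable {E : Type*} [NormedAddCommGroup E] [NormedSpace ℝ E] {X : E → E} {K L : ℝ≥0}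

theorem mem_Ioo_neg_abs_add (t : ℝ) {r : ℝ} (hr : 0 < r) : t ∈ Ioo (-(|t| + r)) (|t| + r) :=
  abs_lt.1 (lt_add_of_pos_right _ hr)

theorem exists_eqOn_Ioo_of_nested {β : Type*} {α : ℝ → ℝ → β}
    (h : ∀ S T, 0 ≤ S → S ≤ T → EqOn (α S) (α T) (Ioo (-S) S)) :
    ∃ γ : ℝ → β, ∀ T, EqOn γ (α T) (Ioo (-T) T) := by
  refine ⟨fun t => α (|t| + 1) t, fun T t ht => ?_⟩
  rcases le_total (|t| + 1) T with hT | hT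
  · exact h _ _ (by positivity) hT (mem_Ioo_neg_abs_add t one_pos)
  · exact (h _ _ ((abs_nonneg t).trans (abs_lt.2 ht).le) hT ht).symm

theorem hasDerivAt_of_isIntegralCurveOn_Ioo {v : ℝ → E → E} {γ : ℝ → E} {a b t : ℝ}
    (h : IsIntegralCurveOn γ v (Ioo a b)) (ht : t ∈ Ioo a b) : HasDerivAt γ (v t (γ t)) t :=
  (h t ht).hasDerivAt (Ioo_mem_nhds ht.1 ht.2)

theorem eqOn_Ioo_of_isIntegralCurveOn (hK : LipschitzWith K X) {T : ℝ} {γ δ : ℝ → E}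
    (hγ : IsIntegralCurveOn γ (fun _ => X) (Ioo (-T) T))
    (hδ : IsIntegralCurveOn δ (fun _ => X) (Ioo (-T) T)) (h0 : γ 0 = δ 0) :
    EqOn γ δ (Ioo (-T) T) := by
  intro t ht
  have hT : 0 < T := neg_lt_self_iff.1 (ht.1.trans ht.2)
  exact ODE_solution_unique_of_mem_Ioo (v := fun _ => X) (s := fun _ => univ) (t₀ := 0)
    (fun _ _ => hK.lipschitzOnWith) ⟨neg_neg_of_pos hT, hT⟩
    (fun s hs => ⟨hasDerivAt_of_isIntegralCurveOn_Ioo hγ hs, mem_univ _⟩)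
    (fun s hs => ⟨hasDerivAt_of_isIntegralCurveOn_Ioo hδ hs, mem_univ _⟩) h0 ht

theorem exists_isIntegralCurveOn_Ioo [CompleteSpace E] (hK : LipschitzWith K X)
    (hL : ∀ x, ‖X x‖ ≤ L) (x : E) {T : ℝ} (hT : 0 ≤ T) :
    ∃ γ : ℝ → E, γ 0 = x ∧ IsIntegralCurveOn γ (fun _ => X) (Ioo (-T) T) := by
  have hPL : IsPicardLindelof (fun _ => X) (tmin := -T) (tmax := T) ⟨0, by simp [hT]⟩ x
      (L * ⟨T, hT⟩) 0 L K := by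
    refine .of_time_independent (fun y _ => hL y) hK.lipschitzOnWith ?_
    simp [show ((L * ⟨T, hT⟩ : ℝ≥0) : ℝ) = L * T from rfl]
  obtain ⟨γ, h0, hγ⟩ := hPL.exists_eq_forall_mem_Icc_hasDerivWithinAt₀
  exact ⟨γ, h0, fun t ht => (hγ t (Ioo_subset_Icc_self ht)).mono Ioo_subset_Icc_self⟩

theorem exists_isIntegralCurve [CompleteSpace E] (hK : LipschitzWith K X) (hL : ∀ x, ‖X x‖ ≤ L)
    (x : E) : ∃ γ : ℝ → E, γ 0 = x ∧ IsIntegralCurve γ fun _ => X := by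
  have hex (T : ℝ) (hT : 0 ≤ T) := exists_isIntegralCurveOn_Ioo hK hL x hT
  choose! α hα0 hα using hex
  obtain ⟨γ, hγ⟩ := exists_eqOn_Ioo_of_nested (α := α) fun S T hS hST =>
    eqOn_Ioo_of_isIntegralCurveOn hK (hα S hS)
      ((hα T (hS.trans hST)).mono (Ioo_subset_Ioo (neg_le_neg hST) hST))
      ((hα0 S hS).trans (hα0 T (hS.trans hST)).symm)
  refine ⟨γ, (hγ 1 (by simp)).trans (hα0 1 zero_le_one), fun t => ?_⟩
  have ht := mem_Ioo_neg_abs_add t one_pos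
  rw [hγ _ ht]
  exact (hasDerivAt_of_isIntegralCurveOn_Ioo (hα (|t| + 1) (by positivity)) ht)
    |>.congr_of_eventuallyEq ((hγ _).eventuallyEq_of_mem (Ioo_mem_nhds ht.1 ht.2))

theorem norm_le_norm_mul_exp_of_norm_deriv_le {g g' : ℝ → E} {s : Set ℝ} [hs : OrdConnected s]
    {C a b : ℝ} (ha : a ∈ s) (hb : b ∈ s) (hg : ∀ t ∈ s, HasDerivAt g (g' t) t)
    (hbound : ∀ t ∈ s, ‖g' t‖ ≤ C * ‖g t‖) : ‖g a‖ ≤ ‖g b‖ * Real.exp (C * |b - a|) := by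
  have hforward {h h' : ℝ → E} {a b : ℝ} (hab : a ≤ b)
      (hh : ∀ t ∈ Icc a b, HasDerivAt h (h' t) t) (hb : ∀ t ∈ Icc a b, ‖h' t‖ ≤ C * ‖h t‖) :
      ‖h b‖ ≤ ‖h a‖ * Real.exp (C * (b - a)) := by
    have := norm_le_gronwallBound_of_norm_deriv_right_le (δ := ‖h a‖) (ε := 0)
      (fun t ht => (hh t ht).continuousAt.continuousWithinAt)
      (fun t ht => (hh t (Ico_subset_Icc_self ht)).hasDerivWithinAt) le_rfl
      (fun t ht => by simpa using hb t (Ico_subset_Icc_self ht)) b (right_mem_Icc.2 hab)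
    rwa [gronwallBound_ε0] at this
  rcases le_total b a with hba | hab
  · rw [abs_sub_comm, abs_of_nonneg (sub_nonneg.2 hba)]
    exact hforward hba (fun t ht => hg t (hs.out hb ha ht)) fun t ht => hbound t (hs.out hb ha ht)
  · have hneg {t : ℝ} (ht : t ∈ Icc (-b) (-a)) : -t ∈ s :=
      hs.out ha hb ⟨le_neg.1 ht.2, neg_le.1 ht.1⟩
    have := hforward (h := fun t => g (-t)) (neg_le_neg hab)
      (fun t ht => (hg _ (hneg ht)).scomp t (hasDerivAt_neg t))
      fun t ht => by simpa using hbound _ (hneg ht)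
    rw [abs_of_nonneg (sub_nonneg.2 hab)]
    simpa only [neg_neg, neg_sub_neg] using this

theorem dist_isIntegralCurve_le (hK : LipschitzWith K X) {γ δ : ℝ → E}
    (hγ : IsIntegralCurve γ fun _ => X) (hδ : IsIntegralCurve δ fun _ => X) (t : ℝ) :
    dist (γ t) (δ t) ≤ dist (γ 0) (δ 0) * Real.exp (K * |t|) := by
  simpa [dist_eq_norm] using norm_le_norm_mul_exp_of_norm_deriv_le (mem_univ t) (mem_univ 0)
    (fun s _ => (hγ s).fun_sub (hδ s)) fun s _ => hK.norm_sub_le _ _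

theorem continuous_flow (hK : LipschitzWith K X) {Φ : ℝ → E → E} (h0 : ∀ x, Φ 0 x = x)
    (hΦ : ∀ x, IsIntegralCurve (Φ · x) fun _ => X) : Continuous fun q : ℝ × E => Φ q.1 q.2 := by
  rw [continuous_iff_continuousAt]
  rintro ⟨t, x⟩
  have hcont : Continuous fun q : ℝ × E =>
      dist q.2 x * Real.exp (K * |q.1|) + dist (Φ q.1 x) (Φ t x) := by
    have := (hΦ x).continuous
    fun_prop
  refine tendsto_iff_dist_tendsto_zero.2 (squeeze_zero (fun _ => dist_nonneg) (fun q => ?_)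
    (hcont.tendsto' (t, x) 0 (by simp)))
  refine (dist_triangle _ (Φ q.1 x) _).trans (add_le_add_left ?_ _)
  simpa [h0] using dist_isIntegralCurve_le hK (hΦ q.2) (hΦ x) q.1

theorem exists_flow [CompleteSpace E] (hK : LipschitzWith K X) (hL : ∀ x, ‖X x‖ ≤ L) :
    ∃ Φ : ℝ → E → E, (∀ x, Φ 0 x = x) ∧ (∀ x, IsIntegralCurve (Φ · x) fun _ => X) ∧
      Continuous fun q : ℝ × E => Φ q.1 q.2 := by
  choose γ h0 hγ using exists_isIntegralCurve hK hL
  exact ⟨fun t x => γ x t, h0, hγ, continuous_flow hK h0 hγ⟩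

end Flow

/-! ### The lifting field -/

section LiftField
open scoped ContDiff ComplexConjugate InnerProductSpace

variable {E : Type*} [NormedAddCommGroup E] [InnerProductSpace ℂ E]

/-- A smooth weight supported where the logarithmic radial derivative of `f` has argument in
`[-π/4, π/4]`, the second alternative of `milnor_lemma`. -/
noncomputable def sectorCutoff (f : E → ℂ) (z : E) : ℝ :=
  Real.smoothTransition (radialDeriv f z).re *
    Real.smoothTransition ((radialDeriv f z).re ^ 2 - (radialDeriv f z).im ^ 2)

theorem sectorCutoff_nonneg (f : E → ℂ) (z : E) : 0 ≤ sectorCutoff f z :=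
  mul_nonneg (Real.smoothTransition.nonneg _) (Real.smoothTransition.nonneg _)

theorem sectorCutoff_pos {f : E → ℂ} {z : E} (h : |(radialDeriv f z).im| < (radialDeriv f z).re) :
    0 < sectorCutoff f z :=
  mul_pos (Real.smoothTransition.pos_of_pos ((abs_nonneg _).trans_lt h))
    (Real.smoothTransition.pos_of_pos (sub_pos.2 (sq_lt_sq.2 (h.trans_le (le_abs_self _)))))

theorem abs_im_le_re_of_sectorCutoff_ne_zero {f : E → ℂ} {z : E} (h : sectorCutoff f z ≠ 0) :
    |(radialDeriv f z).im| ≤ (radialDeriv f z).re := by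
  obtain ⟨hre, hsq⟩ := mul_ne_zero_iff.1 h
  rw [ne_eq, Real.smoothTransition.zero_iff_nonpos, not_le] at hre hsq
  exact abs_le_of_sq_le_sq (sub_pos.1 hsq).le hre.le

theorem sectorCutoff_mul_abs_im_le (f : E → ℂ) (z : E) :
    sectorCutoff f z * |(radialDeriv f z).im| ≤ sectorCutoff f z * (radialDeriv f z).re := by
  rcases eq_or_ne (sectorCutoff f z) 0 with h | h
  · simp [h]
  · exact mul_le_mul_of_nonneg_left (abs_im_le_re_of_sectorCutoff_ne_zero h)
      (sectorCutoff_nonneg f z)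

theorem sectorCutoff_mul_re_nonneg (f : E → ℂ) (z : E) :
    0 ≤ sectorCutoff f z * (radialDeriv f z).re :=
  (mul_nonneg (sectorCutoff_nonneg f z) (abs_nonneg _)).trans (sectorCutoff_mul_abs_im_le f z)

theorem contDiffAt_sectorCutoff {f : E → ℂ} {z : E} (hf : AnalyticAt ℂ f z) :
    ContDiffAt ℝ 1 (sectorCutoff f) z := by
  have hre : ContDiffAt ℝ 1 _ z := (contDiffAt_re_radialDeriv hf).of_le le_top
  have him : ContDiffAt ℝ 1 _ z := (contDiffAt_im_radialDeriv hf).of_le le_top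
  exact ((Real.smoothTransition.contDiff (n := 1)).contDiffAt.comp z hre).mul
    ((Real.smoothTransition.contDiff (n := 1)).contDiffAt.comp z ((hre.pow 2).sub (him.pow 2)))

variable [CompleteSpace E]

/-- The normalising denominator of `liftField`, positive under either alternative of
`milnor_lemma`. -/
noncomputable def liftDenom (f : E → ℂ) (z : E) : ℝ :=
  sectorCutoff f z * (radialDeriv f z).re + gradientGram f z

theorem liftDenom_pos {f : E → ℂ} {z : E}
    (h : 0 < gradientGram f z ∨ |(radialDeriv f z).im| < (radialDeriv f z).re) :
    0 < liftDenom f z := by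
  rcases h with h | h
  · exact add_pos_of_nonneg_of_pos (sectorCutoff_mul_re_nonneg f z) h
  · exact add_pos_of_pos_of_nonneg (mul_pos (sectorCutoff_pos h) ((abs_nonneg _).trans_lt h))
      (gradientGram_nonneg f z)

theorem contDiffAt_liftDenom {f : E → ℂ} {z : E} (hf : AnalyticAt ℂ f z) :
    ContDiffAt ℝ 1 (liftDenom f) z :=
  ((contDiffAt_sectorCutoff hf).mul ((contDiffAt_re_radialDeriv hf).of_le le_top)).add
    ((contDiffAt_gradientGram hf).of_le le_top)

/-- A vector field tangent to the spheres along which `f` turns at unit angular speed. It combines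
`i z`, which serves where the logarithmic radial derivative of `f` is close to the positive axis,
with the tangential gradient, which serves where `z` and `∇f` are independent. -/
noncomputable def liftField (f : E → ℂ) (z : E) : E :=
  (Complex.I * ((liftDenom f z)⁻¹ : ℝ)) •
    (((‖f z‖ ^ 2 * sectorCutoff f z : ℝ) : ℂ) • z + f z • tangentialGradient f z)

theorem re_inner_liftField (f : E → ℂ) (z : E) : (⟪z, liftField f z⟫_ℂ).re = 0 := by
  have h : ⟪z, liftField f z⟫_ℂ = Complex.I *
      (((liftDenom f z)⁻¹ * (‖f z‖ ^ 2 * sectorCutoff f z * ‖z‖ ^ 2) : ℝ) : ℂ) := by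
    simp only [liftField, inner_smul_right, inner_add_right, inner_tangentialGradient,
      inner_self_eq_ofReal_norm_sq]
    push_cast
    ring
  rw [h, Complex.I_mul_re, Complex.ofReal_im, neg_zero]

/-- The rate of change of `log ‖f‖` along `liftField f`. -/
noncomputable def liftRate (f : E → ℂ) (z : E) : ℝ :=
  -(sectorCutoff f z * (radialDeriv f z).im / liftDenom f z)

theorem abs_liftRate_le_one {f : E → ℂ} {z : E} (h : 0 < liftDenom f z) : |liftRate f z| ≤ 1 := by
  rw [liftRate, abs_neg, abs_div, abs_mul, abs_of_nonneg (sectorCutoff_nonneg f z), abs_of_pos h,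
    div_le_one h]
  exact (sectorCutoff_mul_abs_im_le f z).trans (le_add_of_nonneg_right (gradientGram_nonneg f z))

theorem fderiv_liftField {f : E → ℂ} {z : E} (h : 0 < liftDenom f z) :
    fderiv ℂ f z (liftField f z) = f z * (Complex.I + liftRate f z) := by
  have hrad : (‖f z‖ : ℂ) ^ 2 * fderiv ℂ f z z = f z * radialDeriv f z := by
    rw [radialDeriv, ← Complex.mul_conj', mul_assoc]
  have hdenom : (sectorCutoff f z * radialDeriv f z + gradientGram f z : ℂ) =
      liftDenom f z + sectorCutoff f z * (radialDeriv f z).im * Complex.I := by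
    nth_rw 1 [← Complex.re_add_im (radialDeriv f z)]
    rw [liftDenom]
    push_cast
    ring
  have hne : (liftDenom f z : ℂ) ≠ 0 := Complex.ofReal_ne_zero.2 h.ne'
  calc
    _ = Complex.I * (liftDenom f z : ℂ)⁻¹ *
        (sectorCutoff f z * (‖f z‖ ^ 2 * fderiv ℂ f z z) + f z * gradientGram f z) := by
      simp only [liftField, map_smul, map_add, smul_eq_mul, fderiv_tangentialGradient]
      push_cast
      ring
    _ = Complex.I * (liftDenom f z : ℂ)⁻¹ * f z *
        (liftDenom f z + sectorCutoff f z * (radialDeriv f z).im * Complex.I) := by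
      rw [hrad, ← hdenom]
      ring
    _ = f z * (Complex.I + liftRate f z) := by
      rw [liftRate]
      push_cast
      field_simp
      linear_combination f z * sectorCutoff f z * (radialDeriv f z).im * Complex.I_sq

theorem contDiffAt_tangentialGradient {f : E → ℂ} {z : E} (hf : AnalyticAt ℂ f z) :
    ContDiffAt ℝ ω (tangentialGradient f) z :=
  ((Complex.ofRealCLM.contDiff.contDiffAt.comp z (contDiffAt_id.norm_sq ℂ)).smul
    (contDiffAt_gradient hf)).sub ((contDiffAt_id.inner ℂ (contDiffAt_gradient hf)).smul
    contDiffAt_id)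

theorem contDiffAt_liftField {f : E → ℂ} {z : E} (hf : AnalyticAt ℂ f z) (h : 0 < liftDenom f z) :
    ContDiffAt ℝ 1 (liftField f) z := by
  have hfr : ContDiffAt ℝ 1 f z := hf.restrictScalars.contDiffAt
  have hdenom : ContDiffAt ℝ 1 (fun x => (((liftDenom f x)⁻¹ : ℝ) : ℂ)) z :=
    Complex.ofRealCLM.contDiff.contDiffAt.comp z ((contDiffAt_liftDenom hf).inv h.ne')
  have hweight : ContDiffAt ℝ 1 (fun x => ((‖f x‖ ^ 2 * sectorCutoff f x : ℝ) : ℂ)) z :=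
    Complex.ofRealCLM.contDiff.contDiffAt.comp z
      ((hfr.norm_sq ℂ).mul (contDiffAt_sectorCutoff hf))
  exact (contDiffAt_const.mul hdenom).smul ((hweight.smul contDiffAt_id).add
    (hfr.smul ((contDiffAt_tangentialGradient hf).of_le le_top)))

end LiftField

/-! ### The flow of the lifting field -/

section Cutoff
open scoped NNReal Manifold

variable {E : Type*} [NormedAddCommGroup E] [NormedSpace ℝ E] [FiniteDimensional ℝ E]

theorem exists_contDiff_one_nhds_of_isCompact {K Ω : Set E} (hK : IsCompact K) (hΩ : IsOpen Ω)
    (h : K ⊆ Ω) :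
    ∃ χ : E → ℝ, ContDiff ℝ 1 χ ∧ HasCompactSupport χ ∧ tsupport χ ⊆ Ω ∧ (∀ x ∈ K, χ x = 1) ∧
      ∀ x, χ x ∈ Icc (0 : ℝ) 1 := by
  obtain ⟨K', hK', hKK', hK'Ω⟩ := exists_compact_between hK hΩ h
  have : ProperSpace E := FiniteDimensional.proper ℝ E
  obtain ⟨χ, hone, hzero, hIcc⟩ := exists_contMDiffMap_one_nhds_of_subset_interior (n := 1)
    𝓘(ℝ, E) hK.isClosed hKK'
  have hsupp : tsupport χ ⊆ K' :=
    closure_minimal (fun x hx => not_imp_comm.1 (hzero x) hx) hK'.isClosed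
  exact ⟨χ, χ.contMDiff.contDiff, .intro hK' hzero, hsupp.trans hK'Ω,
    fun x hx => hone.self_of_nhdsSet x hx, hIcc⟩

theorem exists_cutoff_lipschitzWith_bounded {v : E → E} {K Ω : Set E} (hK : IsCompact K)
    (hΩ : IsOpen Ω) (h : K ⊆ Ω) (hv : ∀ x ∈ Ω, ContDiffAt ℝ 1 v x) :
    ∃ χ : E → ℝ, (∀ x, χ x ∈ Icc (0 : ℝ) 1) ∧ (∀ x ∉ Ω, χ x = 0) ∧ (∀ x ∈ K, χ x = 1) ∧
      ∃ C L : ℝ≥0, LipschitzWith C (fun x => χ x • v x) ∧ ∀ x, ‖χ x • v x‖ ≤ L := by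
  obtain ⟨χ, hχ, hcompact, hsupp, hone, hIcc⟩ := exists_contDiff_one_nhds_of_isCompact hK hΩ h
  have hX : ContDiff ℝ 1 fun x => χ x • v x := contDiff_iff_contDiffAt.2 fun x => by
    by_cases hx : x ∈ tsupport χ
    · exact hχ.contDiffAt.smul (hv x (hsupp hx))
    · refine (contDiffAt_const (c := 0)).congr_of_eventuallyEq ?_
      filter_upwards [notMem_tsupport_iff_eventuallyEq.1 hx] with y hy
      simp [hy]
  obtain ⟨C, hC⟩ := hX.lipschitzWith_of_hasCompactSupport hcompact.smul_right one_ne_zero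
  obtain ⟨L, hL⟩ := hcompact.smul_right.exists_bound_of_continuous hX.continuous
  exact ⟨χ, hIcc, fun x hx => image_eq_zero_of_notMem_tsupport (mt (@hsupp x) hx), hone, C,
    L.toNNReal, hC, fun x => (hL x).trans (Real.le_coe_toNNReal L)⟩

end Cutoff

section SphericalLift
open scoped InnerProductSpace

variable {E : Type*} [NormedAddCommGroup E] [InnerProductSpace ℂ E]

theorem norm_eq_of_re_inner_deriv_eq_zero {γ γ' : ℝ → E} (hγ : ∀ t, HasDerivAt γ (γ' t) t)
    (hinner : ∀ t, (⟪γ t, γ' t⟫_ℂ).re = 0) (s t : ℝ) : ‖γ s‖ = ‖γ t‖ := by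
  have hderiv (t : ℝ) : HasDerivAt (fun t => (⟪γ t, γ t⟫_ℂ).re) 0 t := by
    have hsymm : (⟪γ' t, γ t⟫_ℂ).re = 0 := by rw [← inner_conj_symm, Complex.conj_re, hinner]
    simpa [hinner, hsymm] using!
      Complex.reCLM.hasFDerivAt.comp_hasDerivAt t ((hγ t).inner ℂ (hγ t))
  have hconst := is_const_of_deriv_eq_zero (fun t => (hderiv t).differentiableAt)
    (fun t => (hderiv t).deriv) s t
  rw [inner_self_eq_ofReal_norm_sq, inner_self_eq_ofReal_norm_sq] at hconst
  norm_cast at hconst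
  exact (pow_left_inj₀ (norm_nonneg _) (norm_nonneg _) two_ne_zero).1 hconst

theorem hasDerivAt_comp_of_analyticAt {f : E → ℂ} {γ : ℝ → E} {t : ℝ} {v : E}
    (hf : AnalyticAt ℂ f (γ t)) (hγ : HasDerivAt γ v t) :
    HasDerivAt (fun t => f (γ t)) (fderiv ℂ f (γ t) v) t :=
  (hf.differentiableAt.hasFDerivAt.restrictScalars ℝ).comp_hasDerivAt t hγ

theorem hasDerivAt_norm_of_logDeriv {g : ℝ → ℂ} {c : ℂ} {t : ℝ} (hg : HasDerivAt g (g t * c) t)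
    (hne : g t ≠ 0) : HasDerivAt (fun t => ‖g t‖) (‖g t‖ * c.re) t := by
  have hsqrt := hg.norm_sq.sqrt (by simpa using hne)
  simp only [Real.sqrt_sq (norm_nonneg _)] at hsqrt
  convert hsqrt using 1
  have : ‖g t‖ ≠ 0 := norm_ne_zero_iff.2 hne
  field_simp
  rw [Complex.inner, mul_right_comm, Complex.mul_conj', ← Complex.ofReal_pow,
    Complex.re_ofReal_mul]

theorem div_norm_eq_exp_mul {g : ℝ → ℂ} {r : ℝ → ℝ}
    (hg : ∀ t, HasDerivAt g (g t * (Complex.I + r t)) t) (hne : ∀ t, g t ≠ 0) (t : ℝ) :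
    g t / ‖g t‖ = Complex.exp (t * Complex.I) * (g 0 / ‖g 0‖) := by
  have hderiv (t : ℝ) :
      HasDerivAt (fun t : ℝ => g t / ‖g t‖ * Complex.exp (-(t * Complex.I))) 0 t := by
    have hnorm := (hasDerivAt_norm_of_logDeriv (hg t) (hne t)).ofReal_comp
    have hexp : HasDerivAt (fun t : ℝ => Complex.exp (-(t * Complex.I))) _ t :=
      ((Complex.ofRealCLM.hasDerivAt (x := t)).mul_const Complex.I).neg.cexp
    have hne' : (‖g t‖ : ℂ) ≠ 0 := by simpa using hne t
    convert! ((hg t).div hnorm hne').mul hexp using 1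
    simp
    field_simp
    ring
  have hconst := is_const_of_deriv_eq_zero (fun t => (hderiv t).differentiableAt)
    (fun t => (hderiv t).deriv) t 0
  simp only [Complex.ofReal_zero, zero_mul, neg_zero, Complex.exp_zero, mul_one] at hconst
  rw [← hconst, mul_left_comm, ← Complex.exp_add, add_neg_cancel, Complex.exp_zero, mul_one]

/-- The complement, in the sphere of radius `ε`, of the link of the zero set of `f`. -/
def linkComplement (f : E → ℂ) (ε : ℝ) : Set E := {x | ‖x‖ = ε ∧ f x ≠ 0}

variable [CompleteSpace E] {f : E → ℂ} {ε : ℝ} {γ : ℝ → E}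

/-- An open set on which `liftField f` is continuously differentiable. -/
def regularLocus (f : E → ℂ) : Set E := {z | AnalyticAt ℂ f z ∧ 0 < liftDenom f z}

theorem isOpen_regularLocus (f : E → ℂ) : IsOpen (regularLocus f) :=
  isOpen_iff_mem_nhds.2 fun _ hz => hz.1.eventually_analyticAt.and
    ((contDiffAt_liftDenom hz.1).continuousAt.eventually_const_lt hz.2)

theorem norm_fderiv_liftField_le {z : E} (h : 0 < liftDenom f z) :
    ‖fderiv ℂ f z (liftField f z)‖ ≤ 2 * ‖f z‖ := by
  have hrate : ‖Complex.I + (liftRate f z : ℂ)‖ ≤ 1 + 1 :=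
    (norm_add_le _ _).trans (add_le_add Complex.norm_I.le
      ((Complex.norm_real _).trans_le (abs_liftRate_le_one h)))
  rw [fderiv_liftField h, norm_mul, mul_comm, ← one_add_one_eq_two]
  gcongr

theorem norm_fderiv_smul_liftField_le {χ : E → ℝ} (hχ : ∀ z, χ z ∈ Icc (0 : ℝ) 1)
    (hχ0 : ∀ z ∉ regularLocus f, χ z = 0) (z : E) :
    ‖fderiv ℂ f z (χ z • liftField f z)‖ ≤ 2 * ‖f z‖ := by
  by_cases hz : z ∈ regularLocus f
  · rw [← Complex.coe_smul, map_smul, norm_smul, Complex.norm_real, Real.norm_of_nonneg (hχ z).1]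
    exact (mul_le_of_le_one_left (norm_nonneg _) (hχ z).2).trans (norm_fderiv_liftField_le hz.2)
  · simp [hχ0 z hz]

/-- `γ` is, over `s`, an integral curve of `liftField f` in the complement of the link. -/
def IsSphericalLiftOn (f : E → ℂ) (ε : ℝ) (γ : ℝ → E) (s : Set ℝ) : Prop :=
  ∀ t ∈ s, HasDerivAt γ (liftField f (γ t)) t ∧ γ t ∈ linkComplement f ε

theorem IsSphericalLiftOn.mono {s t : Set ℝ} (h : IsSphericalLiftOn f ε γ t) (hst : s ⊆ t) :
    IsSphericalLiftOn f ε γ s :=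
  fun a ha => h a (hst ha)

theorem IsSphericalLiftOn.norm_le (hana : ∀ z, ‖z‖ = ε → AnalyticAt ℂ f z)
    (hpos : ∀ z ∈ linkComplement f ε, 0 < liftDenom f z) {s : Set ℝ} [OrdConnected s]
    (h : IsSphericalLiftOn f ε γ s) {a b : ℝ} (ha : a ∈ s) (hb : b ∈ s) :
    ‖f (γ a)‖ ≤ ‖f (γ b)‖ * Real.exp (2 * |b - a|) :=
  norm_le_norm_mul_exp_of_norm_deriv_le (g := fun t => f (γ t)) ha hb
    (fun t ht => hasDerivAt_comp_of_analyticAt (hana _ (h t ht).2.1) (h t ht).1)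
    fun t ht => norm_fderiv_liftField_le (hpos _ (h t ht).2)

theorem IsSphericalLiftOn.div_norm_eq (hana : ∀ z, ‖z‖ = ε → AnalyticAt ℂ f z)
    (hpos : ∀ z ∈ linkComplement f ε, 0 < liftDenom f z) (h : IsSphericalLiftOn f ε γ univ)
    (t : ℝ) : f (γ t) / ‖f (γ t)‖ = Complex.exp (t * Complex.I) * (f (γ 0) / ‖f (γ 0)‖) := by
  refine div_norm_eq_exp_mul (g := fun t => f (γ t)) (r := fun t => liftRate f (γ t))
    (fun t => ?_) (fun t => (h t (mem_univ t)).2.2) t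
  obtain ⟨hγ, hmem⟩ := h t (mem_univ t)
  rw [← fderiv_liftField (hpos _ hmem)]
  exact hasDerivAt_comp_of_analyticAt (hana _ hmem.1) hγ

theorem norm_eq_of_cutoff {χ : E → ℝ}
    (hγ : IsIntegralCurve γ fun _ z => χ z • liftField f z) (s t : ℝ) : ‖γ s‖ = ‖γ t‖ :=
  norm_eq_of_re_inner_deriv_eq_zero hγ (fun t => by
    dsimp only
    rw [← Complex.coe_smul, inner_smul_right, Complex.re_ofReal_mul, re_inner_liftField,
      mul_zero]) s t

theorem norm_le_of_cutoff (hana : ∀ z, ‖z‖ = ε → AnalyticAt ℂ f z) {χ : E → ℝ}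
    (hχ : ∀ z, χ z ∈ Icc (0 : ℝ) 1) (hχ0 : ∀ z ∉ regularLocus f, χ z = 0)
    (hγ : IsIntegralCurve γ fun _ z => χ z • liftField f z) (h0 : ‖γ 0‖ = ε) (t : ℝ) :
    ‖f (γ 0)‖ ≤ ‖f (γ t)‖ * Real.exp (2 * |t|) := by
  simpa using norm_le_norm_mul_exp_of_norm_deriv_le (g := fun t => f (γ t)) (mem_univ 0)
    (mem_univ t) (fun t _ => hasDerivAt_comp_of_analyticAt
      (hana _ ((norm_eq_of_cutoff hγ t 0).trans h0)) (hγ t))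
    fun t _ => norm_fderiv_smul_liftField_le hχ hχ0 (γ t)

end SphericalLift

section SphericalFlow

variable {E : Type*} [NormedAddCommGroup E] [InnerProductSpace ℂ E] [FiniteDimensional ℂ E]
  {f : E → ℂ} {ε : ℝ}

theorem isCompact_sphere_inter_le_norm (hana : ∀ z, ‖z‖ = ε → AnalyticAt ℂ f z) (κ : ℝ) :
    IsCompact {z : E | ‖z‖ = ε ∧ κ ≤ ‖f z‖} := by
  have : ProperSpace E := FiniteDimensional.proper ℂ E
  have hcont : ContinuousOn (fun z => ‖f z‖) (Metric.sphere 0 ε) := fun z hz =>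
    (hana z (mem_sphere_zero_iff_norm.1 hz)).continuousAt.norm.continuousWithinAt
  convert! (isCompact_sphere (0 : E) ε).of_isClosed_subset
    (hcont.preimage_isClosed_of_isClosed Metric.isClosed_sphere (isClosed_Ici (a := κ)))
    inter_subset_left using 1
  ext z
  simp

/-- Since `log ‖f‖` varies at speed at most `2` along `liftField f`, a trajectory starting where
`κ * exp (2 * T) ≤ ‖f‖` does not feel, for times `|t| < T`, a cut-off of the field away from
`κ ≤ ‖f‖`. -/
theorem exists_local_flow (hana : ∀ z, ‖z‖ = ε → AnalyticAt ℂ f z)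
    (hpos : ∀ z ∈ linkComplement f ε, 0 < liftDenom f z) {κ : ℝ} (hκ : 0 < κ) :
    ∃ Φ : ℝ → E → E, (Continuous fun q : ℝ × E => Φ q.1 q.2) ∧ (∀ x, Φ 0 x = x) ∧
      ∀ x T, ‖x‖ = ε → κ * Real.exp (2 * T) ≤ ‖f x‖ →
        IsSphericalLiftOn f ε (Φ · x) (Ioo (-T) T) ∧
        ∀ γ, IsSphericalLiftOn f ε γ (Ioo (-T) T) → γ 0 = x → EqOn γ (Φ · x) (Ioo (-T) T) := by
  have : FiniteDimensional ℝ E := .complexToReal E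
  have hne {z : E} (hz : κ ≤ ‖f z‖) : f z ≠ 0 := norm_pos_iff.1 (hκ.trans_le hz)
  have hle {a b t T : ℝ} (ha : κ * Real.exp (2 * T) ≤ a) (hb : a ≤ b * Real.exp (2 * |t|))
      (ht : t ∈ Ioo (-T) T) : κ ≤ b := by
    have hexp : Real.exp (2 * |t|) ≤ Real.exp (2 * T) := by gcongr; exact (abs_lt.2 ht).le
    exact le_of_mul_le_mul_right
      ((mul_le_mul_of_nonneg_left hexp hκ.le).trans (ha.trans hb)) (Real.exp_pos _)
  obtain ⟨χ, hχ, hχ0, hχ1, C, L, hC, hL⟩ := exists_cutoff_lipschitzWith_bounded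
    (isCompact_sphere_inter_le_norm hana κ) (isOpen_regularLocus f)
    (fun z hz => ⟨hana z hz.1, hpos z ⟨hz.1, hne hz.2⟩⟩)
    fun z hz => contDiffAt_liftField hz.1 hz.2
  obtain ⟨Φ, hΦ0, hΦ, hΦcont⟩ := exists_flow hC hL
  refine ⟨Φ, hΦcont, hΦ0, fun x T hx hκx => ⟨fun t ht => ?_, fun γ hγ h0 => ?_⟩⟩
  · have hnorm : ‖Φ t x‖ = ε := by rw [norm_eq_of_cutoff (hΦ x) t 0, hΦ0, hx]
    have hfle := norm_le_of_cutoff hana hχ hχ0 (hΦ x) (by rwa [hΦ0]) t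
    rw [hΦ0] at hfle
    have hκΦ := hle hκx hfle ht
    refine ⟨?_, hnorm, hne hκΦ⟩
    simpa [hχ1 _ ⟨hnorm, hκΦ⟩] using hΦ x t
  · refine eqOn_Ioo_of_isIntegralCurveOn hC (fun t ht => ?_) ((hΦ x).isIntegralCurveOn _)
      (h0.trans (hΦ0 x).symm)
    have hfle := hγ.norm_le hana hpos ⟨by linarith [ht.1, ht.2], by linarith [ht.1, ht.2]⟩ ht
      (a := 0)
    rw [h0, sub_zero] at hfle
    simpa [hχ1 _ ⟨(hγ t ht).2.1, hle hκx hfle ht⟩] using (hγ t ht).1.hasDerivWithinAt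

theorem eqOn_Ioo_of_isSphericalLiftOn (hana : ∀ z, ‖z‖ = ε → AnalyticAt ℂ f z)
    (hpos : ∀ z ∈ linkComplement f ε, 0 < liftDenom f z) {γ δ : ℝ → E} {T : ℝ}
    (hγ : IsSphericalLiftOn f ε γ (Ioo (-T) T)) (hδ : IsSphericalLiftOn f ε δ (Ioo (-T) T))
    (h0 : γ 0 = δ 0) : EqOn γ δ (Ioo (-T) T) := by
  intro t ht
  obtain ⟨-, hnorm, hne⟩ := hγ 0 ⟨by linarith [ht.1, ht.2], by linarith [ht.1, ht.2]⟩
  have hκ : 0 < ‖f (γ 0)‖ / Real.exp (2 * T) := div_pos (norm_pos_iff.2 hne) (Real.exp_pos _)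
  obtain ⟨Φ, -, -, hΦ⟩ := exists_local_flow hana hpos hκ
  have huniq := (hΦ _ T hnorm (div_mul_cancel₀ _ (Real.exp_pos _).ne').le).2
  exact (huniq γ hγ rfl ht).trans (huniq δ hδ h0.symm ht).symm

theorem exists_isSphericalLiftOn_univ (hana : ∀ z, ‖z‖ = ε → AnalyticAt ℂ f z)
    (hpos : ∀ z ∈ linkComplement f ε, 0 < liftDenom f z) {x : E} (hx : x ∈ linkComplement f ε) :
    ∃ γ : ℝ → E, γ 0 = x ∧ IsSphericalLiftOn f ε γ univ := by
  have hex (T : ℝ) : ∃ γ : ℝ → E, γ 0 = x ∧ IsSphericalLiftOn f ε γ (Ioo (-T) T) := by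
    have hκ : 0 < ‖f x‖ / Real.exp (2 * T) := div_pos (norm_pos_iff.2 hx.2) (Real.exp_pos _)
    obtain ⟨Φ, -, hΦ0, hΦ⟩ := exists_local_flow hana hpos hκ
    exact ⟨(Φ · x), hΦ0 x, (hΦ x T hx.1 (div_mul_cancel₀ _ (Real.exp_pos _).ne').le).1⟩
  choose α hα0 hα using hex
  obtain ⟨γ, hγ⟩ := exists_eqOn_Ioo_of_nested (α := α) fun S T _ hST =>
    eqOn_Ioo_of_isSphericalLiftOn hana hpos (hα S)
      ((hα T).mono (Ioo_subset_Ioo (neg_le_neg hST) hST)) ((hα0 S).trans (hα0 T).symm)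
  refine ⟨γ, (hγ 1 (by simp)).trans (hα0 1), fun t _ => ?_⟩
  have ht := mem_Ioo_neg_abs_add t one_pos
  rw [hγ _ ht]
  exact (hα _ t ht).imp_left fun h =>
    h.congr_of_eventuallyEq ((hγ _).eventuallyEq_of_mem (Ioo_mem_nhds ht.1 ht.2))

theorem continuous_spherical_flow (hana : ∀ z, ‖z‖ = ε → AnalyticAt ℂ f z)
    (hpos : ∀ z ∈ linkComplement f ε, 0 < liftDenom f z) {Ψ : ℝ → linkComplement f ε → E}
    (h0 : ∀ x, Ψ 0 x = x) (hΨ : ∀ x, IsSphericalLiftOn f ε (Ψ · x) univ) :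
    Continuous fun q : ℝ × linkComplement f ε => Ψ q.1 q.2 := by
  rw [continuous_iff_continuousAt]
  rintro ⟨t, x⟩
  have hfx : 0 < ‖f x‖ := norm_pos_iff.2 x.2.2
  set T := |t| + 1
  obtain ⟨Φ, hΦcont, -, hΦ⟩ := exists_local_flow hana hpos
    (κ := ‖f x‖ / 2 / Real.exp (2 * T)) (by positivity)
  have hcontf : ContinuousAt (fun q : ℝ × linkComplement f ε => ‖f q.2‖) (t, x) :=
    (ContinuousAt.comp_of_eq (g := f) (f := fun q : ℝ × linkComplement f ε => (q.2 : E))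
      (hana x x.2.1).continuousAt (by fun_prop) rfl).norm
  have hcontΦ : Continuous fun q : ℝ × linkComplement f ε => Φ q.1 q.2 :=
    hΦcont.comp (f := fun q : ℝ × linkComplement f ε => (q.1, (q.2 : E))) (by fun_prop)
  refine hcontΦ.continuousAt.congr ?_
  filter_upwards [hcontf.eventually_const_lt (half_lt_self hfx),
    (continuous_fst.abs.continuousAt (x := (t, x))).eventually_lt_const (lt_add_one |t|)]
    with q hfq hq
  refine ((hΦ q.2 T q.2.2.1 ?_).2 _ ((hΨ q.2).mono (subset_univ _)) (h0 q.2) (abs_lt.1 hq)).symm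
  rw [div_mul_cancel₀ _ (Real.exp_pos _).ne']
  exact hfq.le

theorem exists_spherical_flow (hana : ∀ z, ‖z‖ = ε → AnalyticAt ℂ f z)
    (hpos : ∀ z ∈ linkComplement f ε, 0 < liftDenom f z) :
    ∃ Ψ : ℝ → linkComplement f ε → linkComplement f ε,
      (Continuous fun q : ℝ × linkComplement f ε => Ψ q.1 q.2) ∧
      (∀ t x, Ψ (-t) (Ψ t x) = x) ∧
      ∀ t x, f (Ψ t x) / ‖f (Ψ t x)‖ = Complex.exp (t * Complex.I) * (f x / ‖f x‖) := by
  choose γ h0 hγ using fun x : linkComplement f ε => exists_isSphericalLiftOn_univ hana hpos x.2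
  refine ⟨fun t x => ⟨γ x t, (hγ x t (mem_univ t)).2⟩,
    (continuous_spherical_flow hana hpos h0 hγ).subtype_mk _, fun t x => Subtype.ext ?_,
    fun t x => by simpa only [h0] using (hγ x).div_norm_eq hana hpos t⟩
  have hshift : IsSphericalLiftOn f ε (fun s => γ x (s + t)) univ := fun s _ =>
    (hγ x (s + t) (mem_univ _)).imp_left fun h => h.comp_add_const s t
  have heq := eqOn_Ioo_of_isSphericalLiftOn hana hpos
    ((hγ ⟨γ x t, (hγ x t (mem_univ t)).2⟩).mono (subset_univ _)) (hshift.mono (subset_univ _))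
    (by simp [h0]) (mem_Ioo_neg_abs_add (-t) one_pos)
  exact heq.trans (by simp [h0])

end SphericalFlow

/-! ### Local trivializations -/

section Trivialization

/-- The argument of `w` on the branch through `b`, continuous away from the ray of `-b`. -/
noncomputable def branch (b w : ℂ) : ℝ := Complex.arg b + Complex.arg (w / b)

theorem exp_branch {b w : ℂ} (hb : ‖b‖ = 1) (hw : ‖w‖ = 1) :
    Complex.exp (branch b w * Complex.I) = w := by
  have hb0 : b ≠ 0 := norm_ne_zero_iff.1 (hb ▸ one_ne_zero)
  have harg {z : ℂ} (hz : ‖z‖ = 1) : Complex.exp (Complex.arg z * Complex.I) = z := by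
    simpa [hz] using Complex.norm_mul_exp_arg_mul_I z
  rw [branch, Complex.ofReal_add, add_mul, Complex.exp_add, harg hb,
    harg (by rw [norm_div, hb, hw, div_one]), mul_div_cancel₀ _ hb0]

theorem continuousOn_branch (b : ℂ) :
    ContinuousOn (branch b) {w | w / b ∈ Complex.slitPlane} := fun w hw =>
  (continuousAt_const.add (ContinuousAt.comp (f := (· / b)) (Complex.continuousAt_arg hw)
    (by fun_prop))).continuousWithinAt

theorem exists_homeomorph_of_flow {X : Type*} [TopologicalSpace X]
    {φ : X → Metric.sphere (0 : ℂ) 1} (hφ : Continuous φ) {Ψ : ℝ → X → X}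
    (hΨ : Continuous fun q : ℝ × X => Ψ q.1 q.2) (hinv : ∀ t x, Ψ (-t) (Ψ t x) = x)
    (hturn : ∀ t x, (φ (Ψ t x) : ℂ) = Complex.exp (t * Complex.I) * φ x)
    {W : Set (Metric.sphere (0 : ℂ) 1)} {θ : W → ℝ} (hθ : Continuous θ)
    (hexp : ∀ w : W, Complex.exp (θ w * Complex.I) = w) :
    ∃ e : (φ ⁻¹' W) ≃ₜ W × {y // (φ y : ℂ) = 1},
      ∀ z, ((e z).1 : Metric.sphere (0 : ℂ) 1) = φ z := by
  have hfibre (z : φ ⁻¹' W) : (φ (Ψ (-θ ⟨φ z, z.2⟩) z) : ℂ) = 1 := by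
    have h := hexp ⟨φ z, z.2⟩
    rw [hturn, ← h, ← Complex.exp_add]
    simp
  have hbase (w : W) (y : {y // (φ y : ℂ) = 1}) : φ (Ψ (θ w) y) = w := by
    rw [Subtype.ext_iff, hturn, hexp, y.2, mul_one]
  have hmem (q : W × {y // (φ y : ℂ) = 1}) : Ψ (θ q.1) q.2 ∈ φ ⁻¹' W := by
    rw [mem_preimage, hbase]
    exact q.1.2
  have hfst : Continuous fun z : φ ⁻¹' W => (⟨φ z, z.2⟩ : W) :=
    (hφ.comp continuous_subtype_val).subtype_mk _
  exact ⟨{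
    toFun z := (⟨φ z, z.2⟩, ⟨Ψ (-θ ⟨φ z, z.2⟩) z, hfibre z⟩)
    invFun q := ⟨Ψ (θ q.1) q.2, hmem q⟩
    left_inv z := Subtype.ext (by simpa using hinv (-θ ⟨φ z, z.2⟩) z)
    right_inv q := by
      refine Prod.ext (Subtype.ext (hbase q.1 q.2)) (Subtype.ext ?_)
      simp only [hbase]
      exact hinv _ _
    continuous_toFun := hfst.prodMk
      ((hΨ.comp ((hθ.comp hfst).neg.prodMk continuous_subtype_val)).subtype_mk _)
    continuous_invFun := (hΨ.comp ((hθ.comp continuous_fst).prodMk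
      (continuous_subtype_val.comp continuous_snd))).subtype_mk hmem }, fun _ => rfl⟩

theorem isLocTrivFib_of_flow {X : Type} [TopologicalSpace X] {φ : X → Metric.sphere (0 : ℂ) 1}
    (hφ : Continuous φ) {Ψ : ℝ → X → X} (hΨ : Continuous fun q : ℝ × X => Ψ q.1 q.2)
    (hinv : ∀ t x, Ψ (-t) (Ψ t x) = x)
    (hturn : ∀ t x, (φ (Ψ t x) : ℂ) = Complex.exp (t * Complex.I) * φ x) : IsLocTrivFib φ := by
  refine ⟨{y // (φ y : ℂ) = 1}, inferInstance, hφ, fun b => ?_⟩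
  have hb0 : (b : ℂ) ≠ 0 := Metric.ne_of_mem_sphere b.2 one_ne_zero
  let W : Set (Metric.sphere (0 : ℂ) 1) := {w | (w : ℂ) / b ∈ Complex.slitPlane}
  have hθ : Continuous fun w : W => branch b (w : ℂ) :=
    (continuousOn_branch b).comp_continuous (by fun_prop) fun w => w.2
  exact ⟨W, Complex.isOpen_slitPlane.preimage (continuous_subtype_val.div_const _),
    by simp [W, hb0], exists_homeomorph_of_flow hφ hΨ hinv hturn hθ fun w =>
      exp_branch (by simp) (by simp)⟩

end Trivialization

/-! ### The Milnor map -/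

section MilnorMap

variable {E : Type*} [NormedAddCommGroup E] {f : E → ℂ} {ε : ℝ}

/-- The Milnor map of `f` on the sphere of radius `ε`, sending `x` to the phase of `f x`. -/
noncomputable def milnorMap (f : E → ℂ) (ε : ℝ) (x : linkComplement f ε) :
    Metric.sphere (0 : ℂ) 1 :=
  ⟨f x / ‖f x‖, by simp [x.2.2]⟩

theorem sphere_diff_zeros_eq_linkComplement {U : Set E} (hU : Metric.sphere 0 ε ⊆ U) :
    Metric.sphere 0 ε \ {x ∈ U | f x = 0} = linkComplement f ε := by
  ext x
  rw [Set.mem_sdiff, mem_ofPred_eq, not_and, linkComplement, mem_ofPred_eq,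
    ← mem_sphere_zero_iff_norm]
  exact and_congr_right fun hx => forall_prop_of_true (hU hx)

theorem continuous_milnorMap [NormedSpace ℂ E] (hana : ∀ z, ‖z‖ = ε → AnalyticAt ℂ f z) :
    Continuous (milnorMap f ε) := by
  have hf : Continuous fun x : linkComplement f ε => f x := continuous_iff_continuousAt.2 fun x =>
    (hana x x.2.1).continuousAt.comp continuous_subtype_val.continuousAt
  exact (hf.div (Complex.continuous_ofReal.comp hf.norm) fun x => by simp [x.2.2]).subtype_mk _

theorem eventually_liftDenom_pos [InnerProductSpace ℂ E] [FiniteDimensional ℂ E]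
    (hf : AnalyticAt ℂ f 0) (hf0 : f 0 = 0) :
    ∀ᶠ z in 𝓝 0, f z ≠ 0 → 0 < liftDenom f z :=
  (milnor_lemma hf hf0).mono fun _ h hz => liftDenom_pos (h hz)

theorem isLocTrivFib_milnorMap {E : Type} [NormedAddCommGroup E] [InnerProductSpace ℂ E]
    [FiniteDimensional ℂ E] {f : E → ℂ} {ε : ℝ} (hana : ∀ z, ‖z‖ = ε → AnalyticAt ℂ f z)
    (hpos : ∀ z ∈ linkComplement f ε, 0 < liftDenom f z) :
    IsLocTrivFib (milnorMap f ε) := by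
  obtain ⟨Ψ, hΨ, hinv, hturn⟩ := exists_spherical_flow hana hpos
  exact isLocTrivFib_of_flow (continuous_milnorMap hana) hΨ hinv hturn

end MilnorMap

end Milnor

theorem stmt_3_general {E : Type} [NormedAddCommGroup E] [InnerProductSpace ℂ E]
    [FiniteDimensional ℂ E] {U : Set E} (hU : IsOpen U) (h0U : 0 ∈ U) {f : E → ℂ}
    (hf : DifferentiableOn ℂ f U) (hf0 : f 0 = 0) :
    ∃ ε₀ > (0 : ℝ), Metric.closedBall 0 ε₀ ⊆ U ∧ ∀ ε ≤ ε₀,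
      ∃ φ : (Metric.sphere 0 ε \ {x ∈ U | f x = 0} : Set E) → Metric.sphere (0 : ℂ) 1,
        (∀ x, (φ x : ℂ) = f x / ‖f x‖) ∧ IsLocTrivFib φ := by
  have hana : AnalyticAt ℂ f 0 := Milnor.analyticAt_of_differentiableOn hU h0U hf
  obtain ⟨ε₀, hε₀, hgood⟩ := Metric.nhds_basis_closedBall.eventually_iff.1 <|
    (hU.eventually_mem h0U).and <|
      hana.eventually_analyticAt.and (Milnor.eventually_liftDenom_pos hana hf0)
  refine ⟨ε₀, hε₀, fun z hz => (hgood hz).1, fun ε hε => ?_⟩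
  have hsphere {z : E} (hz : ‖z‖ = ε) : z ∈ Metric.closedBall 0 ε₀ := by simpa [hz] using hε
  rw [Milnor.sphere_diff_zeros_eq_linkComplement fun z hz =>
    (hgood (hsphere (mem_sphere_zero_iff_norm.1 hz))).1]
  exact ⟨Milnor.milnorMap f ε, fun _ => rfl,
    Milnor.isLocTrivFib_milnorMap (fun z hz => (hgood (hsphere hz)).2.1)
      fun z hz => (hgood (hsphere hz.1)).2.2 hz.2⟩

theorem stmt_3 (n : ℕ) (hn : 1 ≤ n)
    (U : Set (EuclideanSpace ℂ (Fin n))) (hU : IsOpen U)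
    (h0U : (0 : EuclideanSpace ℂ (Fin n)) ∈ U)
    (f : EuclideanSpace ℂ (Fin n) → ℂ) (hf : DifferentiableOn ℂ f U) (hf0 : f 0 = 0)
    (hfnz : ∀ W ∈ nhds (0 : EuclideanSpace ℂ (Fin n)), ∃ x ∈ W ∩ U, f x ≠ 0) :
    ∃ ε₀ > (0 : ℝ), Metric.closedBall (0 : EuclideanSpace ℂ (Fin n)) ε₀ ⊆ U ∧
      ∀ ε : ℝ, 0 < ε → ε ≤ ε₀ →
      ∃ φ : (Metric.sphere (0 : EuclideanSpace ℂ (Fin n)) ε \ {x ∈ U | f x = 0} : Set _) →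
          Metric.sphere (0 : ℂ) 1,
        (∀ x, (φ x : ℂ) =
            f (x.1 : EuclideanSpace ℂ (Fin n)) / ‖f (x.1 : EuclideanSpace ℂ (Fin n))‖) ∧
        IsLocTrivFib φ := by
  obtain ⟨ε₀, hε₀, hball, hfib⟩ := stmt_3_general hU h0U hf hf0
  exact ⟨ε₀, hε₀, hball, fun ε _ hε => hfib ε hε⟩
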